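/- Let X be the punctured Möbius band with boundary circles C₁ and C₂. If f : X → X is a boundary-preserving map with f(C₁) ⊆ C₂ and f(C₂) ⊆ C₁, and both restrictions f|C₁ : C₁ → ∂X and f|C₂ : C₂ → ∂X are inessential, then f is boundary-homotopic to a map g : X → X having exactly one fixed point, and that fixed point lies in X ∖ ∂X. -/

import Mathlib

open Set

namespace PMB

/-- The square [0,1] × [−1,1] as a subspace of ℝ². -/
def Sq : Set (ℝ × ℝ) := Set.Icc 0 1 ×ˢ Set.Icc (-1) 1

/-- The identification (0,y) ∼ (1,−y) on the square. -/
def rel (p q : Sq) : Prop :=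
  (p : ℝ × ℝ) = (q : ℝ × ℝ) ∨
  ((p : ℝ × ℝ).1 = 0 ∧ (q : ℝ × ℝ).1 = 1 ∧ (p : ℝ × ℝ).2 = -(q : ℝ × ℝ).2) ∨
  ((p : ℝ × ℝ).1 = 1 ∧ (q : ℝ × ℝ).1 = 0 ∧ (q : ℝ × ℝ).2 = -(p : ℝ × ℝ).2)

/-- The Möbius band: the quotient of the square by the identification. -/
def M := Quot rel

instance : TopologicalSpace M := inferInstanceAs (TopologicalSpace (Quot rel))

/-- The quotient map. -/
def qm : Sq → M := Quot.mk rel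

/-- The open disc of radius 1/4 centred at (1/2, 0). -/
def Bdisc : Set (ℝ × ℝ) := Metric.ball (1/2, 0) (1/4)

/-- The circle of radius 1/4 centred at (1/2, 0). -/
def Scirc : Set (ℝ × ℝ) := Metric.sphere (1/2, 0) (1/4)

/-- The punctured Möbius band, as a subset of the Möbius band. -/
def Xset : Set M := {m | m ∉ qm '' {p : Sq | (p : ℝ × ℝ) ∈ Bdisc}}

/-- The punctured Möbius band as a topological space. -/
abbrev X : Type := ↥Xset

/-- The boundary circle of the Möbius band. -/
def C1 : Set X := {x | ∃ p : Sq, qm p = (x : M) ∧ ((p : ℝ × ℝ).2 = 1 ∨ (p : ℝ × ℝ).2 = -1)}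

/-- The boundary circle coming from the removed disc. -/
def C2 : Set X := {x | ∃ p : Sq, qm p = (x : M) ∧ (p : ℝ × ℝ) ∈ Scirc}

/-- The boundary of the punctured Möbius band. -/
def Bd : Set X := C1 ∪ C2

/-- A self-map of the punctured Möbius band is boundary-preserving if it sends ∂X into ∂X. -/
def BoundaryPreserving (f : C(X, X)) : Prop := MapsTo f Bd Bd

/-- Two self-maps are boundary-homotopic if there is a homotopy between them keeping
∂X inside ∂X at all times. -/
def BoundaryHomotopic (f g : C(X, X)) : Prop :=
  ∃ H : ContinuousMap.Homotopy f g, ∀ x : X, x ∈ Bd → ∀ t : unitInterval, H (t, x) ∈ Bd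

/-- A continuous map is inessential if it is homotopic to a constant map. -/
def Inessential {α β : Type*} [TopologicalSpace α] [TopologicalSpace β] (f : C(α, β)) : Prop :=
  ∃ b : β, ContinuousMap.Homotopic f (ContinuousMap.const α b)

/-- A continuous map is essential if it is not homotopic to a constant map. -/
def Essential {α β : Type*} [TopologicalSpace α] [TopologicalSpace β] (f : C(α, β)) : Prop :=
  ¬ Inessential f

/-- The restriction of a self-map of X to a subset `s` mapped into a subset `t`,
as a continuous map between the subspaces. -/
def restrictMap (f : C(X, X)) {s t : Set X} (h : MapsTo f s t) : C(s, t) :=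
  ⟨fun x => ⟨f x, h x.2⟩, Continuous.subtype_mk (f.continuous.comp continuous_subtype_val) _⟩

/-! ### The tree -/

abbrev FG := FreeGroup Bool
abbrev Ltr := Bool × Bool

def lt (s : Ltr) : FG := FreeGroup.mk [s]
def inv (s : Ltr) : Ltr := (s.1, !s.2)

@[simp] lemma inv_inv' (s : Ltr) : inv (inv s) = s := by simp [inv]
lemma inv_ne (s : Ltr) : inv s ≠ s := by
  intro h; have := congrArg Prod.snd h; simp [inv] at this
lemma ne_inv (s : Ltr) : s ≠ inv s := (inv_ne s).symm
lemma inv_inj {s t : Ltr} (h : inv s = inv t) : s = t := by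
  rw [← inv_inv' s, h, inv_inv']

lemma lt_inv (s : Ltr) : lt (inv s) = (lt s)⁻¹ := by
  simp [lt, inv, FreeGroup.inv_mk, FreeGroup.invRev]

@[simp] lemma lt_inv_mul (s : Ltr) (g : FG) : lt (inv s) * (lt s * g) = g := by
  rw [lt_inv]; group
@[simp] lemma lt_mul_inv (s : Ltr) (g : FG) : lt s * (lt (inv s) * g) = g := by
  rw [lt_inv]; group

lemma mk_cons (s : Ltr) (L : List Ltr) : (FreeGroup.mk (s :: L) : FG) = lt s * FreeGroup.mk L := by
  simp [lt, FreeGroup.mul_mk]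

lemma toWord_lt (s : Ltr) : (lt s).toWord = [s] := by
  simp [lt]

/-- `s` is the direction from `g` towards the root `1`. -/
def par (g : FG) (s : Ltr) : Prop := g.toWord.head? = some (inv s)

instance (g : FG) (s : Ltr) : Decidable (par g s) := by unfold par; infer_instance

lemma not_par_one (s : Ltr) : ¬ par 1 s := by simp [par]

lemma par_unique {g : FG} {s t : Ltr} (h : par g s) (h' : par g t) : s = t := by
  unfold par at h h'; rw [h] at h'; exact inv_inj (by simpa using h')

lemma toWord_of_not_par {g : FG} {s : Ltr} (h : ¬ par g s) :
    (lt s * g).toWord = s :: g.toWord := by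
  have hr : FreeGroup.IsReduced (s :: g.toWord) := by
    have h0 : FreeGroup.IsReduced g.toWord := FreeGroup.isReduced_toWord
    unfold par at h
    cases hw : g.toWord with
    | nil => exact FreeGroup.IsReduced.singleton
    | cons t L =>
      rw [hw] at h h0
      simp [inv] at h
      unfold FreeGroup.IsReduced at *
      rw [List.isChain_cons_cons]
      refine ⟨?_, h0⟩
      intro h1
      by_contra h2
      apply h
      ext
      · exact h1.symm
      · revert h2; simp; cases s.2 <;> cases t.2 <;> simp
  rw [FreeGroup.toWord_mul, toWord_lt]
  exact hr.reduce_eq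

lemma par_child {g : FG} {s : Ltr} (h : ¬ par g s) : par (lt s * g) (inv s) := by
  simp [par, toWord_of_not_par h]

lemma toWord_of_par {g : FG} {s : Ltr} (h : par g s) :
    g.toWord = inv s :: (lt s * g).toWord := by
  unfold par at h
  cases hw : g.toWord with
  | nil => rw [hw] at h; simp at h
  | cons t L =>
    rw [hw] at h
    simp at h
    subst h
    have h0 : FreeGroup.IsReduced g.toWord := FreeGroup.isReduced_toWord
    have hg : g = lt (inv s) * FreeGroup.mk L := by
      rw [← mk_cons, ← hw, FreeGroup.mk_toWord]
    have hL : FreeGroup.IsReduced L := by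
      rw [hw] at h0; exact List.IsChain.tail h0
    have : lt s * g = FreeGroup.mk L := by rw [hg]; simp
    rw [this, FreeGroup.toWord_mk, hL.reduce_eq]

lemma not_par_parent {g : FG} {s : Ltr} (h : par g s) : ¬ par (lt s * g) (inv s) := by
  intro h'
  have h1 := toWord_of_par h
  have h2 := toWord_of_par h'
  simp at h2
  rw [h2] at h1
  have := congrArg List.length h1
  simp only [List.length_cons] at this
  omega

/-- Points of the tree, as functions measuring the outward coordinate at each vertex. -/
def IsT (o : FG → Ltr → ℝ) : Prop :=
  (∀ g s, 0 ≤ o g s) ∧ (∀ g s, o g s + o (lt s * g) (inv s) = 1) ∧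
  (∀ g s s', s ≠ s' → o g s = 0 ∨ o g s' = 0) ∧ ∃ g, ∀ s, o g s < 1

def T := {o : FG → Ltr → ℝ // IsT o}

instance : TopologicalSpace T := inferInstanceAs (TopologicalSpace {o : FG → Ltr → ℝ // IsT o})

lemma T.continuous_coord (g : FG) (s : Ltr) : Continuous (fun ξ : T => ξ.1 g s) :=
  (continuous_apply s).comp ((continuous_apply g).comp continuous_subtype_val)

lemma IsT.le_one {o} (h : IsT o) (g : FG) (s : Ltr) : o g s ≤ 1 := by
  have := h.2.1 g s; have := h.1 (lt s * g) (inv s); linarith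

lemma IsT.eq_zero {o} (h : IsT o) {g : FG} {s t : Ltr} (hs : 0 < o g s) (hst : t ≠ s) :
    o g t = 0 := by
  rcases h.2.2.1 g t s hst with h | h
  · exact h
  · exact absurd h hs.ne'

lemma IsT.far_aux {o} (h : IsT o) {g : FG} (hg : ∀ s, o g s < 1) :
    ∀ (L : List Ltr) (s : Ltr), FreeGroup.IsReduced (s :: L) →
      0 < o (FreeGroup.mk (s :: L) * g) (inv s) ∧
      (L ≠ [] → o (FreeGroup.mk (s :: L) * g) (inv s) = 1) := by
  intro L
  induction L with
  | nil =>
    intro s _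
    refine ⟨?_, fun h => absurd rfl h⟩
    have := h.2.1 g s
    have := hg s
    change 0 < o (lt s * g) (inv s)
    linarith
  | cons t L ih =>
    intro s hr
    have hr' : FreeGroup.IsReduced (t :: L) := List.IsChain.tail hr
    have h1 := (ih t hr').1
    have hne : s ≠ inv t := by
      rintro rfl
      unfold FreeGroup.IsReduced at hr
      rw [List.isChain_cons_cons] at hr
      have := hr.1
      simp [inv] at this
    have h2 := h.eq_zero h1 hne
    have h3 := h.2.1 (FreeGroup.mk (t :: L) * g) s
    rw [h2, ← mul_assoc, ← mk_cons] at h3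
    constructor
    · linarith
    · intro _; linarith

/-- Seen from any other vertex, the point lies in the direction of `g`. -/
lemma IsT.far {o} (h : IsT o) {g g' : FG} (hg : ∀ s, o g s < 1) (hne : g' ≠ g) :
    (∃ t, o g' t = 1) ∨ ∃ s, g' = lt s * g ∧ o g' (inv s) = 1 - o g s ∧ 0 < o g' (inv s) := by
  have hw : (g' * g⁻¹).toWord ≠ [] := by
    rw [Ne, FreeGroup.toWord_eq_nil_iff]
    intro h; apply hne; exact mul_inv_eq_one.mp h
  have hr : FreeGroup.IsReduced (g' * g⁻¹).toWord := FreeGroup.isReduced_toWord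
  have hmk : FreeGroup.mk (g' * g⁻¹).toWord * g = g' := by
    rw [FreeGroup.mk_toWord]; group
  cases hL : (g' * g⁻¹).toWord with
  | nil => exact absurd hL hw
  | cons s L =>
    rw [hL] at hr hmk
    have := h.far_aux hg L s hr
    rw [hmk] at this
    by_cases hL0 : L = []
    · right
      subst hL0
      refine ⟨s, hmk.symm, ?_, this.1⟩
      have := h.2.1 g s
      have e : lt s * g = g' := hmk
      rw [e] at this
      linarith
    · left
      exact ⟨_, this.2 hL0⟩

/-- The deck group action. -/
instance : MulAction FG T where
  smul γ ξ := ⟨fun g s => ξ.1 (g * γ) s, by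
    obtain ⟨o, h1, h2, h3, g, h4⟩ := ξ
    refine ⟨fun g s => h1 _ _, fun g s => ?_, fun g s s' => h3 _ s s', g * γ⁻¹, fun s => ?_⟩
    · have := h2 (g * γ) s
      rwa [← mul_assoc] at this
    · simpa using h4 s⟩
  one_smul ξ := by
    apply Subtype.ext; funext g s; change ξ.1 (g * 1) s = _; simp
  mul_smul γ γ' ξ := by
    apply Subtype.ext; funext g s
    change ξ.1 (g * (γ * γ')) s = ξ.1 (g * γ * γ') s
    rw [mul_assoc]

lemma T.smul_apply (γ : FG) (ξ : T) (g : FG) (s : Ltr) : (γ • ξ).1 g s = ξ.1 (g * γ) s := rfl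

instance : ContinuousConstSMul FG T where
  continuous_const_smul γ := by
    refine Continuous.subtype_mk ?_ _
    refine continuous_pi fun g => continuous_pi fun s => T.continuous_coord _ _

/-- The quotient graph. -/
abbrev Gr := MulAction.orbitRel.Quotient FG T

def toGr : T → Gr := Quotient.mk _

lemma toGr_eq {ξ η : T} : toGr ξ = toGr η ↔ ∃ γ : FG, γ • η = ξ := by
  unfold toGr
  rw [Quotient.eq]
  rfl

lemma toGr_smul (γ : FG) (ξ : T) : toGr (γ • ξ) = toGr ξ := toGr_eq.2 ⟨γ, rfl⟩

lemma toGr_cov : IsQuotientCoveringMap toGr FG where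
  toIsQuotientMap := isQuotientMap_quot_mk
  continuous_const_smul := continuous_const_smul
  apply_eq_iff_mem_orbit := by
    intro a b
    rw [toGr_eq]; rfl
  disjoint := by
    intro ξ
    by_cases hA : ∃ g, ∀ s, ξ.1 g s < 1/2
    · obtain ⟨g, hg⟩ := hA
      refine ⟨{η | ∀ s, η.1 g s < 1/2}, ?_, ?_⟩
      · refine IsOpen.mem_nhds ?_ hg
        simp only [ofPred_forall]
        exact isOpen_iInter_of_finite fun s => isOpen_lt (T.continuous_coord g s) continuous_const
      · rintro γ ⟨_, ⟨η, h1, rfl⟩, h2⟩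
        by_contra hγ
        simp only [mem_ofPred_eq, T.smul_apply] at h1 h2
        rcases η.2.far (g := g) (g' := g * γ) (fun s => by linarith [h1 s]) (by simpa using hγ)
          with ⟨t, ht⟩ | ⟨s, -, h3, -⟩
        · linarith [h2 t]
        · linarith [h1 s, h2 (inv s)]
    · push Not at hA
      obtain ⟨g, hg⟩ := ξ.2.2.2.2
      obtain ⟨s, hs⟩ := hA g
      refine ⟨{η | 0 < η.1 g s ∧ η.1 g s < 1}, ?_, ?_⟩
      · refine IsOpen.mem_nhds ?_ ⟨by linarith, hg s⟩
        exact (isOpen_lt continuous_const (T.continuous_coord g s)).inter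
          (isOpen_lt (T.continuous_coord g s) continuous_const)
      · rintro γ ⟨_, ⟨η, h1, rfl⟩, h2⟩
        by_contra hγ
        simp only [mem_ofPred_eq, T.smul_apply] at h1 h2
        have hall : ∀ t, η.1 g t < 1 := by
          intro t
          by_cases hts : t = s
          · rw [hts]; exact h1.2
          · rw [η.2.eq_zero h1.1 hts]; norm_num
        rcases η.2.far (g := g) (g' := g * γ) hall (by simpa using hγ)
          with ⟨t, ht⟩ | ⟨t, -, h3, h4⟩
        · have : s ≠ t := by rintro rfl; linarith
          rw [η.2.eq_zero (by rw [ht]; norm_num) this] at h2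
          linarith
        · by_cases hst : s = inv t
          · have : t ≠ s := by rw [hst]; exact ne_inv t
            rw [η.2.eq_zero h1.1 this] at h3
            rw [← hst] at h3
            linarith
          · rw [η.2.eq_zero h4 hst] at h2
            linarith

lemma adj_of_child {o : FG → Ltr → ℝ}
    (h : ∀ g s, ¬ par g s → o g s + o (lt s * g) (inv s) = 1) (g : FG) (s : Ltr) :
    o g s + o (lt s * g) (inv s) = 1 := by
  by_cases hp : par g s
  · have := h (lt s * g) (inv s) (not_par_parent hp)
    simp at this
    linarith
  · exact h g s hp

lemma lt_mul_eq_lt {g : FG} {s a : Ltr} (hp : ¬ par g s) : lt s * g = lt a ↔ g = 1 ∧ s = a := by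
  constructor
  · intro h
    have := toWord_of_not_par hp
    rw [h, toWord_lt] at this
    simp at this
    exact ⟨this.2, this.1.symm⟩
  · rintro ⟨rfl, rfl⟩; simp

lemma lt_ne_one (a : Ltr) : lt a ≠ 1 := by
  intro h
  have := toWord_lt a
  rw [h] at this
  simp at this

open Classical in
/-- The point at parameter `t` on the edge from `1` to `lt a`. -/
noncomputable def edgeFun (a : Ltr) (t : ℝ) (g : FG) (s : Ltr) : ℝ :=
  if par g s then (if g = lt a then 1 - t else 1) else (if g = 1 ∧ s = a then t else 0)

lemma edgeFun_isT (a : Ltr) (t : unitInterval) : IsT (edgeFun a t) := by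
  have t0 := t.2.1
  have t1 := t.2.2
  refine ⟨?_, ?_, ?_, ?_⟩
  · intro g s
    unfold edgeFun
    split_ifs <;> linarith
  · apply adj_of_child
    intro g s hp
    unfold edgeFun
    rw [if_neg hp, if_pos (par_child hp)]
    by_cases h : g = 1 ∧ s = a
    · rw [if_pos h, if_pos ((lt_mul_eq_lt hp).2 h)]; ring
    · rw [if_neg h, if_neg (fun h' => h ((lt_mul_eq_lt hp).1 h'))]; ring
  · intro g s s' hne
    by_contra hcon
    push Not at hcon
    obtain ⟨h1, h2⟩ := hcon
    unfold edgeFun at h1 h2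
    by_cases hp : par g s
    · have hp' : ¬ par g s' := fun h => hne (par_unique hp h)
      rw [if_neg hp'] at h2
      have : g = 1 := by
        by_contra hg; exact h2 (if_neg (fun h => hg h.1))
      rw [this] at hp
      exact not_par_one s hp
    · rw [if_neg hp] at h1
      have hs : g = 1 ∧ s = a := by
        by_contra hg; exact h1 (if_neg hg)
      rw [hs.1, if_neg (not_par_one s')] at h2
      have hs' : s' = a := by
        by_contra hg; exact h2 (if_neg (fun h => hg h.2))
      exact hne (hs.2.trans hs'.symm)
  · by_cases ht : (t : ℝ) < 1
    · refine ⟨1, fun s => ?_⟩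
      unfold edgeFun
      rw [if_neg (not_par_one s)]
      split_ifs <;> linarith
    · refine ⟨lt a, fun s => ?_⟩
      have hne : ¬ (lt a = 1 ∧ s = a) := fun h => lt_ne_one a h.1
      unfold edgeFun
      rw [if_pos rfl, if_neg hne]
      split_ifs <;> linarith

noncomputable def edge (a : Ltr) (t : unitInterval) : T := ⟨edgeFun a t, edgeFun_isT a t⟩

lemma edge_continuous (a : Ltr) : Continuous (edge a) := by
  refine Continuous.subtype_mk ?_ _
  refine continuous_pi fun g => continuous_pi fun s => ?_
  unfold edgeFun
  split_ifs <;> fun_prop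

noncomputable def rootFun (g : FG) (s : Ltr) : ℝ := if par g s then 1 else 0

lemma edgeFun_zero (a : Ltr) : edgeFun a 0 = rootFun := by
  funext g s
  unfold edgeFun rootFun
  split_ifs <;> simp

noncomputable def root : T := edge (true, true) 0

lemma root_apply (g : FG) (s : Ltr) : root.1 g s = rootFun g s := by
  change edgeFun _ ((0 : unitInterval) : ℝ) g s = _
  rw [show ((0 : unitInterval) : ℝ) = 0 from rfl, edgeFun_zero]

lemma edge_zero (a : Ltr) : edge a 0 = root := by
  apply Subtype.ext
  funext g s
  rw [root_apply]
  change edgeFun _ ((0 : unitInterval) : ℝ) g s = _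
  rw [show ((0 : unitInterval) : ℝ) = 0 from rfl, edgeFun_zero]

/-- A point sitting at a vertex is determined by that vertex. -/
lemma vertex_unique {ξ η : T} {g : FG} (h1 : ∀ s, ξ.1 g s = 0) (h2 : ∀ s, η.1 g s = 0) : ξ = η := by
  have key : ∀ (ζ : T), (∀ s, ζ.1 g s = 0) → ∀ (L : List Ltr) (s : Ltr),
      FreeGroup.IsReduced (s :: L) → ζ.1 (FreeGroup.mk (s :: L) * g) (inv s) = 1 := by
    intro ζ hζ L s hr
    by_cases hL : L = []
    · subst hL
      have := ζ.2.2.1 g s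
      rw [hζ s] at this
      change ζ.1 (lt s * g) (inv s) = 1
      linarith
    · exact (ζ.2.far_aux (g := g) (fun s => by rw [hζ s]; norm_num) L s hr).2 hL
  apply Subtype.ext
  funext g' t
  have hr : FreeGroup.IsReduced (g' * g⁻¹).toWord := FreeGroup.isReduced_toWord
  have hmk : FreeGroup.mk (g' * g⁻¹).toWord * g = g' := by
    rw [FreeGroup.mk_toWord]; group
  cases hL : (g' * g⁻¹).toWord with
  | nil =>
    rw [hL] at hmk
    have : g = g' := by simpa [FreeGroup.one_eq_mk.symm] using hmk
    rw [← this, h1, h2]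
  | cons s L =>
    rw [hL] at hr hmk
    have e1 := key ξ h1 L s hr
    have e2 := key η h2 L s hr
    rw [hmk] at e1 e2
    by_cases hts : t = inv s
    · rw [hts, e1, e2]
    · rw [ξ.2.eq_zero (by rw [e1]; norm_num) hts, η.2.eq_zero (by rw [e2]; norm_num) hts]

lemma edge_one_apply (a : Ltr) (s : Ltr) : (edge a 1).1 (lt a) s = 0 := by
  change edgeFun a ((1 : unitInterval) : ℝ) (lt a) s = 0
  have hne : ¬ (lt a = 1 ∧ s = a) := fun h => lt_ne_one a h.1
  unfold edgeFun
  rw [if_pos rfl, if_neg hne]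
  simp

lemma edge_one (a : Ltr) : edge a 1 = (lt a)⁻¹ • root := by
  refine vertex_unique (g := lt a) (edge_one_apply a) (fun s => ?_)
  rw [T.smul_apply, mul_inv_cancel, root_apply, rootFun, if_neg (not_par_one s)]

lemma toGr_edge_one (a : Ltr) : toGr (edge a 1) = toGr root := by
  rw [edge_one, toGr_smul]

/-! Contraction -/
noncomputable def kap (n : ℕ) (s : ℝ) : ℝ := max 0 (min 1 ((n + 2) * (1 - (n + 1) * s)))

lemma kap_nonneg (n s) : 0 ≤ kap n s := le_max_left _ _
lemma kap_le (n s) : kap n s ≤ 1 := max_le (by norm_num) (min_le_left _ _)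
lemma kap_zero (n : ℕ) : kap n 0 = 1 := by
  unfold kap
  have : (1 : ℝ) ≤ (n + 2) * (1 - (n + 1) * 0) := by
    have : (0 : ℝ) ≤ n := n.cast_nonneg
    linarith
  rw [min_eq_left this]; norm_num
lemma kap_one (n : ℕ) : kap n 1 = 0 := by
  unfold kap
  apply max_eq_left
  refine (min_le_right _ _).trans ?_
  have : (0 : ℝ) ≤ n := n.cast_nonneg
  nlinarith
lemma kap_succ {n : ℕ} {s : ℝ} (h : 0 < kap (n + 1) s) : kap n s = 1 := by
  unfold kap at *
  have hn : (0 : ℝ) ≤ n := n.cast_nonneg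
  have h1 : 0 < ((n + 1 : ℕ) + 2 : ℝ) * (1 - ((n + 1 : ℕ) + 1) * s) := by
    by_contra hcon
    push Not at hcon
    rw [max_eq_left ((min_le_right _ _).trans hcon)] at h
    exact lt_irrefl _ h
  push_cast at h1
  have h2 : 0 < 1 - ((n : ℝ) + 1 + 1) * s := by
    by_contra hcon
    push Not at hcon
    nlinarith
  have h3 : (1 : ℝ) ≤ (n + 2) * (1 - (n + 1) * s) := by nlinarith
  rw [min_eq_left h3]; norm_num
lemma kap_continuous (n) : Continuous (kap n) := by unfold kap; fun_prop

noncomputable def contrFun (s : ℝ) (o : FG → Ltr → ℝ) (g : FG) (t : Ltr) : ℝ :=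
  if par g t then max (o g t) (1 - kap (g.toWord.length - 1) s)
  else min (o g t) (kap g.toWord.length s)

lemma contrFun_isT (s : ℝ) {o} (h : IsT o) : IsT (contrFun s o) := by
  have hadj : ∀ g t, contrFun s o g t + contrFun s o (lt t * g) (inv t) = 1 := by
    apply adj_of_child
    intro g t hp
    unfold contrFun
    rw [if_neg hp, if_pos (par_child hp), toWord_of_not_par hp]
    simp only [List.length_cons, Nat.add_sub_cancel]
    have := h.2.1 g t
    have e : o (lt t * g) (inv t) = 1 - o g t := by linarith
    rw [e]
    rcases le_total (o g t) (kap g.toWord.length s) with h' | h'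
    · rw [min_eq_left h', max_eq_left (by linarith)]; ring
    · rw [min_eq_right h', max_eq_right (by linarith)]; ring
  have hpos : ∀ g t, 0 ≤ contrFun s o g t := by
    intro g t
    unfold contrFun
    split_ifs
    · exact le_max_of_le_left (h.1 g t)
    · exact le_min (h.1 g t) (kap_nonneg _ _)
  refine ⟨hpos, hadj, ?_, ?_⟩
  · have key : ∀ g t t', t ≠ t' → ¬ par g t' → contrFun s o g t = 0 ∨ contrFun s o g t' = 0 := by
      intro g t t' hne hp'
      have z : ∀ u, ¬ par g u → o g u = 0 → contrFun s o g u = 0 := by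
        intro u hu hu0
        unfold contrFun
        rw [if_neg hu, hu0, min_eq_left (kap_nonneg _ _)]
      by_cases hp : par g t
      · rcases (kap_nonneg g.toWord.length s).eq_or_lt with h0 | h0
        · right
          unfold contrFun
          rw [if_neg hp', ← h0, min_eq_right (h.1 _ _)]
        · rcases h.2.2.1 g t t' hne with h1 | h1
          · left
            unfold contrFun
            have hl := congrArg List.length (toWord_of_par hp)
            simp only [List.length_cons] at hl
            rw [hl] at h0
            rw [if_pos hp, hl, Nat.add_sub_cancel, kap_succ h0, h1]
            simp
          · exact Or.inr (z _ hp' h1)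
      · rcases h.2.2.1 g t t' hne with h1 | h1
        · exact Or.inl (z _ hp h1)
        · exact Or.inr (z _ hp' h1)
    intro g t t' hne
    by_cases hp' : par g t'
    · exact (key g t' t hne.symm (fun hp => hne (par_unique hp hp'))).symm
    · exact key g t t' hne hp'
  · have key : ∀ (n : ℕ) (g : FG), g.toWord.length = n → (∀ t, par g t → o g t < 1) →
        (∀ t, ¬ par g t → contrFun s o g t < 1) → ∃ g, ∀ t, contrFun s o g t < 1 := by
      intro n
      induction n with
      | zero =>
        intro g hg h1 h2
        have : g = 1 := by
          rw [← FreeGroup.toWord_eq_nil_iff]; exact List.length_eq_zero_iff.1 hg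
        subst this
        exact ⟨1, fun t => h2 t (not_par_one t)⟩
      | succ n ih =>
        intro g hg h1 h2
        by_cases hex : ∃ t, par g t ∧ ¬ contrFun s o g t < 1
        · obtain ⟨t, hp, hlt⟩ := hex
          have hl := congrArg List.length (toWord_of_par hp)
          simp only [List.length_cons] at hl
          have hn : (lt t * g).toWord.length = n := by omega
          have ho : 0 < o (lt t * g) (inv t) := by
            have := h.2.1 g t
            have := h1 t hp
            linarith
          have hk : kap n s = 0 := by
            unfold contrFun at hlt
            rw [if_pos hp, hg, Nat.add_sub_cancel] at hlt
            have h3 := h1 t hp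
            by_contra hk
            have : 0 < kap n s := lt_of_le_of_ne (kap_nonneg _ _) (Ne.symm hk)
            exact hlt (max_lt h3 (by linarith))
          apply ih (lt t * g) hn
          · intro u hu
            have hu' : u ≠ inv t := by
              rintro rfl; exact not_par_parent hp hu
            rw [h.eq_zero ho hu']; norm_num
          · intro u hu
            unfold contrFun
            rw [if_neg hu, hn, hk]
            exact lt_of_le_of_lt (min_le_right _ _) one_pos
        · push Not at hex
          refine ⟨g, fun t => ?_⟩
          by_cases hp : par g t
          · exact hex t hp
          · exact h2 t hp
    obtain ⟨g, hg⟩ := h.2.2.2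
    refine key _ g rfl (fun t _ => hg t) (fun t ht => ?_)
    unfold contrFun
    rw [if_neg ht]
    exact lt_of_le_of_lt (min_le_left _ _) (hg t)

noncomputable def contr (p : unitInterval × T) : T := ⟨contrFun p.1 p.2.1, contrFun_isT _ p.2.2⟩

lemma contr_continuous : Continuous contr := by
  refine Continuous.subtype_mk ?_ _
  refine continuous_pi fun g => continuous_pi fun t => ?_
  unfold contrFun
  have h1 : Continuous fun p : unitInterval × T => p.2.1 g t :=
    (T.continuous_coord g t).comp continuous_snd
  have h2 : ∀ n, Continuous fun p : unitInterval × T => kap n p.1 := fun n =>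
    (kap_continuous n).comp (continuous_subtype_val.comp continuous_fst)
  split_ifs
  · exact h1.max (continuous_const.sub (h2 _))
  · exact h1.min (h2 _)

lemma contr_zero (ξ : T) : contr (0, ξ) = ξ := by
  apply Subtype.ext
  funext g t
  change contrFun ((0 : unitInterval) : ℝ) ξ.1 g t = _
  unfold contrFun
  have := ξ.2.1 g t
  have := ξ.2.le_one g t
  rw [show ((0 : unitInterval) : ℝ) = 0 from rfl, kap_zero, kap_zero]
  simp [*]

lemma contr_one (ξ : T) : contr (1, ξ) = root := by
  apply Subtype.ext
  funext g t
  rw [root_apply]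
  change contrFun ((1 : unitInterval) : ℝ) ξ.1 g t = _
  unfold contrFun rootFun
  have := ξ.2.1 g t
  have := ξ.2.le_one g t
  rw [show ((1 : unitInterval) : ℝ) = 1 from rfl, kap_one, kap_one]
  simp [*]

/-! ### Basic topology of the punctured Möbius band -/

/-- sup-norm distance to the centre of the hole -/
noncomputable def nn (p : ℝ × ℝ) : ℝ := max |p.1 - 1/2| |p.2|

lemma nn_continuous : Continuous nn := by unfold nn; fun_prop

lemma mem_Bdisc (p : ℝ × ℝ) : p ∈ Bdisc ↔ nn p < 1/4 := by
  simp [Bdisc, Metric.mem_ball, Prod.dist_eq, Real.dist_eq, nn]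

lemma mem_Scirc (p : ℝ × ℝ) : p ∈ Scirc ↔ nn p = 1/4 := by
  unfold Scirc
  rw [Metric.mem_sphere, Prod.dist_eq, Real.dist_eq, Real.dist_eq]
  simp [nn]

lemma rel_inv {p q : Sq} (h : rel p q) : nn p.1 = nn q.1 ∧ |p.1.2| = |q.1.2| := by
  rcases h with h | ⟨h1, h2, h3⟩ | ⟨h1, h2, h3⟩
  · rw [h]; exact ⟨rfl, rfl⟩
  · unfold nn; rw [h1, h2, h3, abs_neg]; norm_num
  · unfold nn; rw [h1, h2, h3, abs_neg]; norm_num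

/-- An injective continuous map from the Möbius band to a Hausdorff space. -/
noncomputable def emb0 (p : Sq) : ℝ × ℝ × ℝ × ℝ :=
  (p.1.1 * (1 - p.1.1), p.1.1 ^ 2 * (1 - p.1.1), p.1.2 * (1 - 2 * p.1.1), p.1.2 * (p.1.1 * (1 - p.1.1)))

lemma emb0_rel {p q : Sq} (h : rel p q) : emb0 p = emb0 q := by
  rcases h with h | ⟨h1, h2, h3⟩ | ⟨h1, h2, h3⟩
  · rw [Subtype.ext h]
  · unfold emb0; rw [h1, h2, h3]; norm_num
  · unfold emb0; rw [h1, h2, h3]; norm_num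

lemma emb0_inj {p q : Sq} (h : emb0 p = emb0 q) : rel p q := by
  obtain ⟨⟨x, y⟩, hx, hy⟩ := p
  obtain ⟨⟨x', y'⟩, hx', hy'⟩ := q
  simp only [emb0, Prod.mk.injEq] at h
  obtain ⟨h1, h2, h3, h4⟩ := h
  simp only [rel, Prod.mk.injEq]
  by_cases h0 : x * (1 - x) = 0
  · have h0' := h0
    rw [h1] at h0'
    rcases mul_eq_zero.1 h0 with h5 | h5 <;> rcases mul_eq_zero.1 h0' with h6 | h6
    · left; subst h5; subst h6; simpa using h3
    · right; left
      have : x' = 1 := by linarith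
      subst h5; subst this
      refine ⟨rfl, rfl, ?_⟩; linarith
    · right; right
      have : x = 1 := by linarith
      subst h6; subst this
      refine ⟨rfl, rfl, ?_⟩; linarith
    · left
      have : x = 1 := by linarith
      have : x' = 1 := by linarith
      subst x; subst x'
      exact ⟨rfl, by linarith⟩
  · left
    have hx : x = x' := by
      apply mul_right_cancel₀ h0
      nth_rewrite 2 [h1]
      linarith
    subst hx
    exact ⟨rfl, mul_right_cancel₀ h0 h4⟩

noncomputable def emb : M → ℝ × ℝ × ℝ × ℝ := Quot.lift emb0 (fun _ _ => emb0_rel)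

lemma qm_eq {p q : Sq} : qm p = qm q ↔ rel p q :=
  ⟨fun h => emb0_inj (congrArg emb h), fun h => Quot.sound h⟩

lemma qm_continuous : Continuous qm := continuous_quot_mk

instance : T2Space M := by
  refine T2Space.of_injective_continuous (f := emb) ?_ ?_
  · rintro ⟨p⟩ ⟨q⟩ h
    exact Quot.sound (emb0_inj h)
  · refine continuous_quot_lift _ ?_
    unfold emb0; fun_prop

/-- The square with the hole removed. -/
def PS : Set (ℝ × ℝ) := {p | p ∈ Sq ∧ 1/4 ≤ nn p}

lemma mem_PS {p : ℝ × ℝ} : p ∈ PS ↔ (0 ≤ p.1 ∧ p.1 ≤ 1) ∧ |p.2| ≤ 1 ∧ 1/4 ≤ nn p := by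
  simp only [PS, Sq, Set.mem_ofPred_eq, Set.mem_prod, Set.mem_Icc, abs_le]
  tauto

lemma isClosed_Sq : IsClosed Sq := isClosed_Icc.prod isClosed_Icc

lemma isCompact_PS : IsCompact PS := by
  have h : IsCompact Sq := isCompact_Icc.prod isCompact_Icc
  exact h.inter_right (isClosed_le continuous_const nn_continuous)

instance : CompactSpace PS := isCompact_iff_compactSpace.1 isCompact_PS

lemma qm_mem_X (p : Sq) : qm p ∈ Xset ↔ 1/4 ≤ nn p.1 := by
  constructor
  · intro h
    by_contra hcon
    push Not at hcon
    exact h ⟨p, (mem_Bdisc _).2 hcon, rfl⟩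
  · rintro h ⟨q, hq, he⟩
    have := (mem_Bdisc _).1 hq
    rw [(rel_inv (qm_eq.1 he)).1] at this
    linarith

def pr (p : PS) : X := ⟨qm ⟨p.1, p.2.1⟩, (qm_mem_X _).2 p.2.2⟩

lemma pr_continuous : Continuous pr := by
  refine Continuous.subtype_mk ?_ _
  exact qm_continuous.comp (Continuous.subtype_mk continuous_subtype_val _)

lemma pr_surj : Function.Surjective pr := by
  rintro ⟨m, hm⟩
  obtain ⟨p, rfl⟩ : ∃ p, qm p = m := Quot.exists_rep m
  exact ⟨⟨p.1, p.2, (qm_mem_X _).1 hm⟩, rfl⟩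

lemma pr_eq {p q : PS} : pr p = pr q ↔ rel ⟨p.1, p.2.1⟩ ⟨q.1, q.2.1⟩ := by
  rw [← qm_eq, Subtype.ext_iff]; rfl

lemma pr_glue {p q : PS} (h1 : p.1.1 = 0) (h2 : q.1.1 = 1) (h3 : p.1.2 = - q.1.2) : pr p = pr q :=
  pr_eq.2 (Or.inr (Or.inl ⟨h1, h2, h3⟩))

theorem desc {A Z : Type*} [TopologicalSpace A] [CompactSpace A] [T2Space A] [TopologicalSpace Z]
    (F : A × PS → Z) (hF : Continuous F)
    (hc : ∀ a (p q : PS), p.1.1 = 0 → q.1.1 = 1 → p.1.2 = - q.1.2 → F (a, p) = F (a, q)) :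
    ∃ G : C(A × X, Z), ∀ a p, G (a, pr p) = F (a, p) := by
  have hcont : Continuous (Prod.map id pr : A × PS → A × X) := continuous_id.prodMap pr_continuous
  have hq : Topology.IsQuotientMap (Prod.map id pr : A × PS → A × X) :=
    hcont.isClosedMap.isQuotientMap hcont (Function.surjective_id.prodMap pr_surj)
  have hfac : ∀ u v : A × PS, Prod.map id pr u = Prod.map id pr v → F u = F v := by
    rintro ⟨a, p⟩ ⟨b, q⟩ h
    simp only [Prod.map_apply, id, Prod.mk.injEq] at h
    obtain ⟨rfl, h⟩ := h
    rcases pr_eq.1 h with h | ⟨h1, h2, h3⟩ | ⟨h1, h2, h3⟩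
    · have e : p = q := Subtype.ext h
      rw [e]
    · exact hc a p q h1 h2 h3
    · exact (hc a q p h2 h1 h3).symm
  let f : C(A × PS, A × X) := ⟨_, hcont⟩
  refine ⟨Topology.IsQuotientMap.lift (f := f) hq ⟨F, hF⟩ hfac, fun a p => ?_⟩
  have := Topology.IsQuotientMap.lift_comp (f := f) hq ⟨F, hF⟩ hfac
  exact congrArg (fun k : C(A × PS, Z) => k (a, p)) this

theorem desc0 {Z : Type*} [TopologicalSpace Z] (F : PS → Z) (hF : Continuous F)
    (hc : ∀ (p q : PS), p.1.1 = 0 → q.1.1 = 1 → p.1.2 = - q.1.2 → F p = F q) :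
    ∃ G : C(X, Z), ∀ p, G (pr p) = F p := by
  obtain ⟨G, hG⟩ := desc (A := Unit) (fun u => F u.2) (hF.comp continuous_snd) (fun _ => hc)
  exact ⟨⟨fun x => G ((), x), by fun_prop⟩, fun p => hG () p⟩

theorem desc_self (F : unitInterval × (ℝ × ℝ) → ℝ × ℝ)
    (hF : ContinuousOn F {u | u.2 ∈ PS}) (hm : ∀ s, ∀ p ∈ PS, F (s, p) ∈ PS)
    (hc : ∀ s y, (0, y) ∈ PS → (F (s, (0, y))).1 = 0 ∧ (F (s, (1, -y))).1 = 1 ∧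
      (F (s, (0, y))).2 = - (F (s, (1, -y))).2) :
    ∃ G : C(unitInterval × X, X), ∀ s (p : PS), G (s, pr p) = pr ⟨F (s, p.1), hm s p.1 p.2⟩ := by
  refine desc (fun u : unitInterval × PS => pr ⟨F (u.1, u.2.1), hm u.1 u.2.1 u.2.2⟩) ?_ ?_
  · refine pr_continuous.comp (Continuous.subtype_mk ?_ _)
    exact hF.comp_continuous (by fun_prop) (fun u => u.2.2)
  · rintro s ⟨⟨x, y⟩, hp⟩ ⟨⟨x', y'⟩, hp'⟩ h1 h2 h3
    simp only at h1 h2 h3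
    subst h1 h2
    have := hc s y hp
    have e : y' = -y := by linarith
    subst e
    exact pr_glue this.1 this.2.1 this.2.2

lemma exists_ay : ∃ G : C(X, ℝ), ∀ p, G (pr p) = |p.1.2| :=
  desc0 (fun p => |p.1.2|) (by fun_prop) (fun p q _ _ h => by rw [h, abs_neg])

lemma exists_nX : ∃ G : C(X, ℝ), ∀ p, G (pr p) = nn p.1 :=
  desc0 (fun p => nn p.1) (nn_continuous.comp continuous_subtype_val)
    (fun p q h1 h2 h3 => by unfold nn; rw [h1, h2, h3, abs_neg]; norm_num)

noncomputable def ay : C(X, ℝ) := exists_ay.choose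
lemma ay_pr (p : PS) : ay (pr p) = |p.1.2| := exists_ay.choose_spec p
noncomputable def nX : C(X, ℝ) := exists_nX.choose
lemma nX_pr (p : PS) : nX (pr p) = nn p.1 := exists_nX.choose_spec p

lemma mem_C1 (x : X) : x ∈ C1 ↔ ay x = 1 := by
  obtain ⟨p, rfl⟩ := pr_surj x
  rw [ay_pr]
  constructor
  · rintro ⟨q, hq, h⟩
    have := (rel_inv (qm_eq.1 hq)).2
    change |q.1.2| = |p.1.2| at this
    rw [← this]
    rcases h with h | h <;> rw [h] <;> norm_num
  · intro h
    refine ⟨⟨p.1, p.2.1⟩, rfl, ?_⟩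
    exact (abs_eq (by norm_num)).1 h

lemma mem_C2 (x : X) : x ∈ C2 ↔ nX x = 1/4 := by
  obtain ⟨p, rfl⟩ := pr_surj x
  rw [nX_pr]
  constructor
  · rintro ⟨q, hq, h⟩
    have := (rel_inv (qm_eq.1 hq)).1
    change nn q.1 = nn p.1 at this
    rw [← this]
    exact (mem_Scirc _).1 h
  · intro h
    exact ⟨⟨p.1, p.2.1⟩, rfl, (mem_Scirc _).2 h⟩

lemma ay_le (x : X) : ay x ≤ 1 := by
  obtain ⟨p, rfl⟩ := pr_surj x
  rw [ay_pr]; exact (mem_PS.1 p.2).2.1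

lemma nX_ge (x : X) : 1/4 ≤ nX x := by
  obtain ⟨p, rfl⟩ := pr_surj x
  rw [nX_pr]; exact p.2.2

lemma ay_le_nX (x : X) : ay x ≤ nX x := by
  obtain ⟨p, rfl⟩ := pr_surj x
  rw [nX_pr, ay_pr]; exact le_max_right _ _

lemma C1_C2 {x : X} (h1 : x ∈ C1) (h2 : x ∈ C2) : False := by
  rw [mem_C1] at h1; rw [mem_C2] at h2
  have := ay_le_nX x
  rw [h1, h2] at this
  norm_num at this

lemma isClosed_C1 : IsClosed C1 := by
  have : C1 = ay ⁻¹' {1} := by ext x; exact mem_C1 x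
  rw [this]; exact isClosed_singleton.preimage ay.continuous

lemma isClosed_C2 : IsClosed C2 := by
  have : C2 = nX ⁻¹' {1/4} := by ext x; exact mem_C2 x
  rw [this]; exact isClosed_singleton.preimage nX.continuous

/-! ### Deformations -/

lemma exists_sig : ∃ G : C(unitInterval × X, X),
    (∀ x, G (0, x) = x) ∧ (∀ s x, ay (G (s, x)) = min (ay x) (1 - s / 4)) ∧
    (∀ s, ∀ x ∈ C2, G (s, x) = x) := by
  have key : ∀ (y : ℝ) (s : unitInterval),
      |max (-(1 - (s:ℝ) / 4)) (min (1 - s / 4) y)| = min |y| (1 - s / 4) := by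
    intro y s
    have h0 := s.2.1
    have h1 := s.2.2
    rcases abs_cases y with ⟨h, h'⟩ | ⟨h, h'⟩
    · rw [h, max_eq_right, abs_of_nonneg, min_comm]
      · exact le_min (by linarith) h'
      · exact le_min (by linarith) (by linarith)
    · rw [h, min_eq_right (by linarith), abs_of_nonpos (max_le (by linarith) (by linarith)),
        ← min_neg_neg, neg_neg, min_comm]
  obtain ⟨G, hG⟩ := desc_self
    (fun u => (u.2.1, max (-(1 - (u.1:ℝ) / 4)) (min (1 - u.1 / 4) u.2.2)))
    (by fun_prop) (by
      rintro s ⟨x, y⟩ hp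
      rw [mem_PS] at hp ⊢
      refine ⟨hp.1, ?_, ?_⟩
      · simp only [key]
        exact (min_le_left _ _).trans hp.2.1
      · have h1 := s.2.2
        have := hp.2.2
        unfold nn at this ⊢
        simp only [key]
        rcases le_max_iff.1 this with h | h
        · exact le_max_of_le_left h
        · exact le_max_of_le_right (le_min h (by linarith))) (by
      intro s y hp
      refine ⟨rfl, rfl, ?_⟩
      simp only
      rw [← min_neg_neg, neg_neg, max_comm, ← max_neg_neg, neg_neg, min_comm, max_comm]
      have h1 := s.2.2
      rw [max_min_distrib_left]
      rw [max_eq_right (a := -(1 - (s:ℝ) / 4)) (b := 1 - s / 4) (by linarith), min_comm])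
  refine ⟨G, ?_, ?_, ?_⟩
  · intro x
    obtain ⟨p, rfl⟩ := pr_surj x
    rw [hG]
    congr 1
    have := abs_le.1 (mem_PS.1 p.2).2.1
    ext
    · rfl
    · simp [this.1, this.2]
  · intro s x
    obtain ⟨p, rfl⟩ := pr_surj x
    rw [hG, ay_pr, ay_pr]
    exact key _ _
  · intro s x hx
    rw [mem_C2] at hx
    obtain ⟨p, rfl⟩ := pr_surj x
    rw [nX_pr] at hx
    have h2 : |p.1.2| ≤ 1/4 := by rw [← hx]; exact le_max_right _ _
    have h3 := abs_le.1 h2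
    have h1 := s.2.2
    rw [hG]
    congr 1
    ext
    · rfl
    · simp only
      rw [min_eq_right (by linarith), max_eq_right (by linarith)]

/-- radial factor -/
noncomputable def ka (n : ℝ) : ℝ := max (1 / (4 * n)) (min 1 (8 * n - 3))
/-- vertical factor -/
noncomputable def mu (t : ℝ) : ℝ := min (1 / max t (1/2)) (max 1 (4 * t - 1))

lemma ka_le {n : ℝ} (h : 1/4 ≤ n) : ka n ≤ 1 := by
  refine max_le ?_ (min_le_left _ _)
  rw [div_le_one (by linarith)]; linarith

lemma ka_mul {n : ℝ} (h : 1/4 ≤ n) : 1/4 ≤ ka n * n := by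
  have h1 : 1 / (4 * n) ≤ ka n := le_max_left _ _
  have h2 := mul_le_mul_of_nonneg_right h1 (show 0 ≤ n by linarith)
  have h3 : 1 / (4 * n) * n = 1/4 := by field_simp
  linarith

lemma ka_pos {n : ℝ} (h : 1/4 ≤ n) : 0 ≤ ka n := 
  le_max_of_le_left (by positivity)

lemma ka_big {n : ℝ} (h : 1/2 ≤ n) : ka n = 1 := by
  refine le_antisymm (ka_le (by linarith)) (le_max_of_le_right (le_min le_rfl (by linarith)))

lemma ka_small {n : ℝ} (h : 1/4 ≤ n) (h' : n ≤ 3/8) : ka n = 1 / (4 * n) := by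
  refine max_eq_left ((min_le_right _ _).trans ?_)
  have : (0:ℝ) ≤ 1 / (4 * n) := by positivity
  linarith

lemma mu_ge {t : ℝ} (h : t ≤ 1) : 1 ≤ mu t := by
  refine le_min ?_ (le_max_left _ _)
  rw [le_div_iff₀ (lt_max_of_lt_right (by norm_num)), one_mul]
  exact max_le h (by norm_num)

lemma mu_mul {t : ℝ} (h : 0 ≤ t) : t * mu t ≤ 1 := by
  have h1 : mu t ≤ 1 / max t (1/2) := min_le_left _ _
  have h2 := mul_le_mul_of_nonneg_left h1 h
  have h4 : 0 < max t (1/2) := lt_max_of_lt_right (by norm_num)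
  have h3 : t * (1 / max t (1/2)) ≤ 1 := by
    rw [mul_one_div, div_le_one h4]; exact le_max_left _ _
  linarith

lemma mu_big {t : ℝ} (h : 3/4 ≤ t) : mu t = 1 / t := by
  unfold mu
  rw [max_eq_left (show 1/2 ≤ t by linarith)]
  refine min_eq_left (le_max_of_le_right ?_)
  rw [div_le_iff₀ (by linarith)]
  nlinarith

lemma mu_small {t : ℝ} (h : t ≤ 3/8) : mu t = 1 := by
  unfold mu
  rw [max_eq_right (show t ≤ 1/2 by linarith), max_eq_left (by linarith)]
  norm_num

lemma exists_rho : ∃ G : C(unitInterval × X, X),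
    (∀ x, G (0, x) = x) ∧ (∀ s, ∀ x ∈ Bd, G (s, x) = x) ∧
    (∀ x, 3/4 ≤ ay x → G (1, x) ∈ C1) ∧ (∀ x, nX x ≤ 3/8 → G (1, x) ∈ C2) := by
  let k : unitInterval × (ℝ × ℝ) → ℝ := fun u => (1 - (u.1:ℝ)) + u.1 * ka (nn u.2)
  let m : unitInterval × (ℝ × ℝ) → ℝ := fun u => (1 - (u.1:ℝ)) + u.1 * mu |u.2.2|
  have kle : ∀ s, ∀ p ∈ PS, k (s, p) ≤ 1 := by
    intro s p hp
    have := ka_le (mem_PS.1 hp).2.2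
    have h0 := s.2.1
    simp only [k]; nlinarith
  have kge : ∀ s, ∀ p ∈ PS, 0 ≤ k (s, p) := by
    intro s p hp
    have := ka_pos (mem_PS.1 hp).2.2
    have h0 := s.2.1
    have h1 := s.2.2
    simp only [k]; nlinarith
  have kmul : ∀ s, ∀ p ∈ PS, 1/4 ≤ k (s, p) * nn p := by
    intro s p hp
    have := ka_mul (mem_PS.1 hp).2.2
    have h0 := s.2.1
    have h1 := s.2.2
    have h2 := (mem_PS.1 hp).2.2
    have h3 : k (s, p) * nn p = (1 - s) * nn p + s * (ka (nn p) * nn p) := by simp only [k]; ring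
    rw [h3]; nlinarith
  have mge : ∀ s, ∀ p ∈ PS, 1 ≤ m (s, p) := by
    intro s p hp
    have := mu_ge (mem_PS.1 hp).2.1
    have h0 := s.2.1
    simp only [m]; nlinarith
  have mmul : ∀ s, ∀ p ∈ PS, |p.2| * m (s, p) ≤ 1 := by
    intro s p hp
    have := mu_mul (abs_nonneg p.2)
    have h0 := s.2.1
    have h1 := s.2.2
    have h2 := (mem_PS.1 hp).2.1
    have h3 : |p.2| * m (s, p) = (1 - s) * |p.2| + s * (|p.2| * mu |p.2|) := by simp only [m]; ring
    rw [h3]; nlinarith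
  have kc : ContinuousOn k {u | u.2 ∈ PS} := by
    have : ContinuousOn (fun u : unitInterval × (ℝ × ℝ) => 1 / (4 * nn u.2)) {u | u.2 ∈ PS} := by
      refine ContinuousOn.div continuousOn_const ?_ ?_
      · exact (continuous_const.mul (nn_continuous.comp continuous_snd)).continuousOn
      · intro u hu
        have := (mem_PS.1 hu).2.2
        have : 0 < nn u.2 := by linarith
        positivity
    have h2 : Continuous (fun u : unitInterval × (ℝ × ℝ) => min 1 (8 * nn u.2 - 3)) := by
      have := nn_continuous
      fun_prop
    have h3 : Continuous (fun u : unitInterval × (ℝ × ℝ) => (u.1 : ℝ)) := by fun_prop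
    exact (continuousOn_const.sub h3.continuousOn).add (h3.continuousOn.mul (ContinuousOn.sup this h2.continuousOn))
  have mc : Continuous m := by
    have : Continuous (fun u : unitInterval × (ℝ × ℝ) => 1 / max |u.2.2| (1/2)) := by
      refine Continuous.div continuous_const (by fun_prop) ?_
      intro u
      have : 0 < max |u.2.2| (1/2) := lt_max_of_lt_right (by norm_num)
      exact this.ne'
    simp only [m, mu]
    fun_prop
  have nnF : ∀ s, ∀ p ∈ PS, nn (1/2 + (p.1 - 1/2) * k (s, p), p.2 * (k (s, p) * m (s, p)))
      = k (s, p) * max |p.1 - 1/2| (|p.2| * m (s, p)) := by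
    intro s p hp
    have h1 := kge s p hp
    have h2 := mge s p hp
    unfold nn
    simp only [add_sub_cancel_left, abs_mul]
    rw [abs_of_nonneg h1, abs_of_nonneg (show 0 ≤ m (s, p) by linarith), mul_max_of_nonneg _ _ h1]
    congr 1
    · ring
    · ring
  obtain ⟨G, hG⟩ := desc_self
    (fun u => (1/2 + (u.2.1 - 1/2) * k u, u.2.2 * (k u * m u)))
    (by
      have h1 : Continuous (fun u : unitInterval × (ℝ × ℝ) => u.2.1 - 1/2) := by fun_prop
      have h2 : Continuous (fun u : unitInterval × (ℝ × ℝ) => u.2.2) := by fun_prop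
      exact (continuousOn_const.add (h1.continuousOn.mul kc)).prodMk
        (h2.continuousOn.mul (kc.mul mc.continuousOn))) (by
      intro s p hp
      rw [mem_PS]
      have hk0 := kge s p hp
      have hk1 := kle s p hp
      have hm1 := mge s p hp
      have hmm := mmul s p hp
      have hp' := mem_PS.1 hp
      refine ⟨?_, ?_, ?_⟩
      · simp only
        constructor <;> nlinarith [hp'.1.1, hp'.1.2]
      · simp only
        rw [abs_mul, abs_mul, abs_of_nonneg hk0, abs_of_nonneg (show 0 ≤ m (s, p) by linarith)]
        have : |p.2| * (k (s,p) * m (s,p)) = k (s,p) * (|p.2| * m (s, p)) := by ring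
        rw [this]
        exact mul_le_one₀ hk1 (by positivity) hmm
      · simp only
        rw [nnF s p hp]
        refine (kmul s p hp).trans (mul_le_mul_of_nonneg_left ?_ hk0)
        refine max_le_max_left _ ?_
        nlinarith [abs_nonneg p.2]) (by
      intro s y hp
      have e0 : ka (nn (0, y)) = 1 := ka_big (le_max_of_le_left (by norm_num [abs_of_pos]))
      have e1 : ka (nn (1, -y)) = 1 := ka_big (le_max_of_le_left (by norm_num [abs_of_pos]))
      simp only [k, m, e0, e1, abs_neg]
      refine ⟨by ring, by ring, by ring⟩)
  have hfix : ∀ s (p : PS), k (s, p.1) = 1 → m (s, p.1) = 1 → G (s, pr p) = pr p := by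
    intro s p h1 h2
    rw [hG]
    congr 1
    ext
    · simp only [h1]; ring
    · simp only [h1, h2]; ring
  refine ⟨G, ?_, ?_, ?_, ?_⟩
  · intro x
    obtain ⟨p, rfl⟩ := pr_surj x
    apply hfix <;> simp [k, m]
  · intro s x hx
    obtain ⟨p, rfl⟩ := pr_surj x
    have : ka (nn p.1) = 1 ∧ mu |p.1.2| = 1 := by
      rcases hx with hx | hx
      · rw [mem_C1, ay_pr] at hx
        refine ⟨ka_big ?_, ?_⟩
        · refine le_max_of_le_right ?_; rw [hx]; norm_num
        · rw [hx, mu_big (by norm_num)]; norm_num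
      · rw [mem_C2, nX_pr] at hx
        refine ⟨?_, mu_small ?_⟩
        · rw [hx, ka_small] <;> norm_num
        · have : |p.1.2| ≤ nn p.1 := le_max_right _ _
          rw [hx] at this; linarith
    apply hfix
    · simp only [k, this.1]; ring
    · simp only [m, this.2]; ring
  · intro x hx
    obtain ⟨p, rfl⟩ := pr_surj x
    rw [ay_pr] at hx
    rw [mem_C1, hG, ay_pr]
    have h1 : ka (nn p.1) = 1 := ka_big (le_max_of_le_right (by linarith))
    have h2 : mu |p.1.2| = 1 / |p.1.2| := mu_big hx
    simp only [k, m, h1, h2]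
    have h3 : 0 < |p.1.2| := by linarith
    have h4 : ((1 : unitInterval) : ℝ) = 1 := rfl
    rw [h4, abs_mul, sub_self, zero_add, zero_add, one_mul, one_mul, one_mul, abs_of_pos (by positivity : 0 < 1 / |p.1.2|)]
    field_simp
  · intro x hx
    obtain ⟨p, rfl⟩ := pr_surj x
    rw [nX_pr] at hx
    rw [mem_C2, hG, nX_pr]
    simp only
    rw [nnF 1 p.1 p.2]
    have h0 := (mem_PS.1 p.2).2.2
    have h1 : ka (nn p.1) = 1 / (4 * nn p.1) := ka_small h0 hx
    have h2 : mu |p.1.2| = 1 := mu_small ((le_max_right _ _ : |p.1.2| ≤ nn p.1).trans hx)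
    simp only [k, m, h1, h2]
    have h4 : ((1 : unitInterval) : ℝ) = 1 := rfl
    rw [h4, sub_self, zero_add, zero_add, one_mul, one_mul, mul_one]
    change 1 / (4 * nn p.1) * nn p.1 = 1/4
    have : 0 < nn p.1 := by linarith
    field_simp

/-! ### Deformation to the spine -/

noncomputable def psi (x : ℝ) : ℝ := max 0 (min 1 (2 * x - 1/2))
noncomputable def tent (t : ℝ) : ℝ := 2 * min t (1 - t)

lemma psi_continuous : Continuous psi := by unfold psi; fun_prop
lemma tent_continuous : Continuous tent := by unfold tent; fun_prop
lemma psi_mem (x : ℝ) : psi x ∈ Icc (0:ℝ) 1 := ⟨le_max_left _ _, max_le zero_le_one (min_le_left _ _)⟩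
lemma psi_lo {x : ℝ} (h : x ≤ 1/4) : psi x = 0 := 
  max_eq_left ((min_le_right _ _).trans (by linarith))
lemma psi_hi {x : ℝ} (h : 3/4 ≤ x) : psi x = 1 := by
  unfold psi
  rw [min_eq_left (by linarith)]; norm_num
lemma tent_zero : tent 0 = 0 := by norm_num [tent]
lemma tent_one : tent 1 = 0 := by norm_num [tent]
lemma tent_nonneg {t : ℝ} (h : t ∈ Icc (0:ℝ) 1) : 0 ≤ tent t := by
  have : 0 ≤ min t (1 - t) := le_min h.1 (by linarith [h.2])
  unfold tent; linarith
lemma tent_le (t : ℝ) : tent t ≤ 1 := by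
  unfold tent
  have h1 := min_le_left t (1 - t)
  have h2 := min_le_right t (1 - t)
  linarith
lemma tent_small {t : ℝ} (h : tent t ≤ 1/4) : 1/4 ≤ |t - 1/2| := by
  unfold tent at h
  rw [le_abs]
  rcases min_le_iff.1 (show min t (1 - t) ≤ 1/8 by linarith) with h | h
  · right; linarith
  · left; linarith

/-- On `PS` this is `± tent (psi x)` according to the sign of `y`. -/
noncomputable def sg (p : ℝ × ℝ) : ℝ := max (-tent (psi p.1)) (min (tent (psi p.1)) (4 * p.2))

lemma sg_continuous : Continuous sg := by
  unfold sg
  have := psi_continuous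
  have := tent_continuous
  fun_prop

lemma PS_cases {p : ℝ × ℝ} (hp : p ∈ PS) : p.1 ≤ 1/4 ∨ 3/4 ≤ p.1 ∨ 1/4 ≤ p.2 ∨ p.2 ≤ -1/4 := by
  have h := (mem_PS.1 hp).2.2
  unfold nn at h
  rcases le_max_iff.1 h with h | h <;> rcases le_abs.1 h with h | h
  · right; left; linarith
  · left; linarith
  · right; right; left; linarith
  · right; right; right; linarith

lemma sg_zero {p : ℝ × ℝ} (h : tent (psi p.1) = 0) : sg p = 0 := by
  unfold sg; rw [h, neg_zero]; exact max_eq_left (min_le_left _ _)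

lemma sg_pos {p : ℝ × ℝ} (hp : p ∈ PS) (h : 0 ≤ p.2) : sg p = tent (psi p.1) := by
  have h0 := tent_nonneg (psi_mem p.1)
  have h1 := tent_le (psi p.1)
  rcases PS_cases hp with h' | h' | h' | h'
  · have : tent (psi p.1) = 0 := by rw [psi_lo h', tent_zero]
    rw [sg_zero this, this]
  · have : tent (psi p.1) = 0 := by rw [psi_hi h', tent_one]
    rw [sg_zero this, this]
  · unfold sg
    rw [min_eq_left (by linarith), max_eq_right (by linarith)]
  · linarith

lemma sg_neg {p : ℝ × ℝ} (hp : p ∈ PS) (h : p.2 ≤ 0) : sg p = - tent (psi p.1) := by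
  have h0 := tent_nonneg (psi_mem p.1)
  have h1 := tent_le (psi p.1)
  rcases PS_cases hp with h' | h' | h' | h'
  · have : tent (psi p.1) = 0 := by rw [psi_lo h', tent_zero]
    rw [sg_zero this, this, neg_zero]
  · have : tent (psi p.1) = 0 := by rw [psi_hi h', tent_one]
    rw [sg_zero this, this, neg_zero]
  · linarith
  · unfold sg
    rw [min_eq_right (by linarith), max_eq_left (by linarith)]

lemma sg_abs (p : ℝ × ℝ) : |sg p| ≤ 1 := by
  have h0 := tent_nonneg (psi_mem p.1)
  have h1 := tent_le (psi p.1)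
  rw [abs_le]
  exact ⟨by have := le_max_left (-tent (psi p.1)) (min (tent (psi p.1)) (4 * p.2)); unfold sg; linarith,
    max_le (by linarith) ((min_le_left _ _).trans h1)⟩

lemma exists_D1 : ∃ G : C(unitInterval × X, X), (∀ x, G (0, x) = x) ∧
    ∀ p p' : PS, p'.1 = (psi p.1.1, p.1.2) → G (1, pr p) = pr p' := by
  obtain ⟨G, hG⟩ := desc_self
    (fun u => ((1 - (u.1:ℝ)) * u.2.1 + u.1 * psi u.2.1, u.2.2))
    (by have := psi_continuous; fun_prop) (by
      intro s p hp
      have h0 := s.2.1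
      have h1 := s.2.2
      have hp' := mem_PS.1 hp
      have hpsi := psi_mem p.1
      rw [mem_PS]
      refine ⟨⟨?_, ?_⟩, hp'.2.1, ?_⟩
      · simp only; nlinarith [hpsi.1, hpsi.2]
      · simp only; nlinarith [hpsi.1, hpsi.2]
      · unfold nn
        rw [le_max_iff]
        simp only [le_abs]
        rcases PS_cases hp with h' | h' | h' | h'
        · left; right; rw [psi_lo h']; nlinarith
        · left; left; rw [psi_hi h']; nlinarith
        · right; left; exact h'
        · right; right; linarith) (by
      intro s y _
      simp only [psi_lo (show (0:ℝ) ≤ 1/4 by norm_num), psi_hi (show (3/4:ℝ) ≤ 1 by norm_num)]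
      exact ⟨by ring, by ring, by ring⟩)
  refine ⟨G, ?_, ?_⟩
  · intro x
    obtain ⟨p, rfl⟩ := pr_surj x
    rw [hG]
    congr 1
    ext <;> simp
  · intro p p' h
    rw [hG]
    congr 1
    apply Subtype.ext
    rw [h]
    simp

lemma exists_D2 : ∃ G : C(unitInterval × X, X), 
    (∀ p p' : PS, p'.1 = (psi p.1.1, p.1.2) → G (0, pr p) = pr p') ∧
    ∀ p p' : PS, p'.1 = (psi p.1.1, sg p.1) → G (1, pr p) = pr p' := by
  obtain ⟨G, hG⟩ := desc_self
    (fun u => (psi u.2.1, (1 - (u.1:ℝ)) * u.2.2 + u.1 * sg u.2))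
    (by have := psi_continuous; have := sg_continuous; fun_prop) (by
      intro s p hp
      have h0 := s.2.1
      have h1 := s.2.2
      have hp' := mem_PS.1 hp
      have hpsi := psi_mem p.1
      have hs := abs_le.1 (sg_abs p)
      have hy := abs_le.1 hp'.2.1
      rw [mem_PS]
      refine ⟨hpsi, ?_, ?_⟩
      · simp only; rw [abs_le]; constructor <;> nlinarith
      · unfold nn
        rw [le_max_iff]
        simp only
        by_cases ht : tent (psi p.1) ≤ 1/4
        · left; exact tent_small ht
        · push Not at ht
          rcases PS_cases hp with h' | h' | h' | h'
          · left; rw [psi_lo h']; norm_num [abs_of_pos]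
          · left; rw [psi_hi h']; norm_num [abs_of_pos]
          · right; rw [le_abs]; left; rw [sg_pos hp (by linarith)]; nlinarith
          · right; rw [le_abs]; right; rw [sg_neg hp (by linarith)]; nlinarith) (by
      intro s y _
      have e0 : sg (0, y) = 0 := sg_zero (by simp only; rw [psi_lo (by norm_num), tent_zero])
      have e1 : sg (1, -y) = 0 := sg_zero (by simp only; rw [psi_hi (by norm_num), tent_one])
      simp only [psi_lo (show (0:ℝ) ≤ 1/4 by norm_num), psi_hi (show (3/4:ℝ) ≤ 1 by norm_num), e0, e1]
      exact ⟨trivial, trivial, by ring⟩)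
  refine ⟨G, ?_, ?_⟩
  · intro p p' h
    rw [hG]
    congr 1
    apply Subtype.ext
    rw [h]
    simp
  · intro p p' h
    rw [hG]
    congr 1
    apply Subtype.ext
    rw [h]
    simp

/-- The point `(psi x, y)` is in the punctured square. -/
lemma psi_mem_PS {p : ℝ × ℝ} (hp : p ∈ PS) : (psi p.1, p.2) ∈ PS := by
  have hp' := mem_PS.1 hp
  rw [mem_PS]
  refine ⟨psi_mem _, hp'.2.1, ?_⟩
  unfold nn
  rw [le_max_iff]
  simp only [le_abs]
  rcases PS_cases hp with h' | h' | h' | h'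
  · left; right; rw [psi_lo h']; norm_num
  · left; left; rw [psi_hi h']; norm_num
  · right; left; exact h'
  · right; right; linarith

/-! ### The map from the tree to the spine -/

lemma tent_symm (t : ℝ) : tent (1 - t) = tent t := by
  unfold tent; rw [min_comm]; congr 2; ring

lemma spine_mem {t y : ℝ} (h : t ∈ Icc (0:ℝ) 1) (hy : |y| = tent t) : (t, y) ∈ PS := by
  rw [mem_PS]
  refine ⟨h, by simp only; rw [hy]; exact tent_le t, ?_⟩
  unfold nn
  simp only [hy]
  rw [le_max_iff]
  by_cases ht : tent t ≤ 1/4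
  · exact Or.inl (tent_small ht)
  · exact Or.inr (by linarith)

lemma PP_mem (s : Ltr) (t : unitInterval) :
    ((bif s.2 then (t:ℝ) else 1 - t), (bif s.1 then tent t else - tent t)) ∈ PS := by
  have h0 := tent_nonneg t.2
  apply spine_mem
  · cases s.2
    · exact (unitInterval.symm t).2
    · exact t.2
  · cases s.2 <;> cases s.1 <;> simp [abs_of_nonneg h0, tent_symm]

noncomputable def PP (s : Ltr) (t : unitInterval) : X := pr ⟨_, PP_mem s t⟩

lemma PP_continuous (s : Ltr) : Continuous (PP s) := by
  refine pr_continuous.comp (Continuous.subtype_mk ?_ _)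
  have := tent_continuous
  rcases s with ⟨s1, s2⟩
  cases s1 <;> cases s2 <;> simp only [cond_true, cond_false] <;> fun_prop

lemma PP_inv (s : Ltr) (t t' : unitInterval) (h : (t:ℝ) + t' = 1) : PP (inv s) t' = PP s t := by
  have e : (t' : ℝ) = 1 - t := by linarith
  unfold PP
  congr 1
  apply Subtype.ext
  rcases s with ⟨s1, s2⟩
  simp only [inv, e, tent_symm]
  cases s1 <;> cases s2 <;> simp

lemma PP_zero (s s' : Ltr) : PP s 0 = PP s' 0 := by
  have key : ∀ s, PP s 0 = PP (true, true) 0 := by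
    rintro ⟨s1, s2⟩
    cases s2
    · symm
      apply pr_glue <;> cases s1 <;> simp [tent_zero]
    · unfold PP
      congr 1
      apply Subtype.ext
      cases s1 <;> simp [tent_zero]
  rw [key s, key s']

noncomputable def T.co (ξ : T) (g : FG) (s : Ltr) : unitInterval := ⟨ξ.1 g s, ξ.2.1 g s, ξ.2.le_one g s⟩

lemma T.co_continuous (g : FG) (s : Ltr) : Continuous (fun ξ : T => ξ.co g s) :=
  Continuous.subtype_mk (T.continuous_coord g s) _

def Kc (g : FG) (s : Ltr) : Set T := {ξ | ∀ t, t ≠ s → ξ.1 g t = 0}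

lemma Kc_closed (g : FG) (s : Ltr) : IsClosed (Kc g s) := by
  unfold Kc
  simp only [Set.ofPred_forall]
  refine isClosed_iInter fun t => isClosed_iInter fun _ => ?_
  exact isClosed_eq (T.continuous_coord g t) continuous_const

lemma Kc_cover (g : FG) (ξ : T) : ∃ s, ξ ∈ Kc g s := by
  by_cases h : ∃ s, 0 < ξ.1 g s
  · obtain ⟨s, hs⟩ := h
    exact ⟨s, fun t ht => ξ.2.eq_zero hs ht⟩
  · push Not at h
    exact ⟨(true, true), fun t _ => le_antisymm (h t) (ξ.2.1 g t)⟩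

lemma PP_agree {g : FG} {s t : Ltr} {ξ : T} (hs : ξ ∈ Kc g s) (ht : ξ ∈ Kc g t) :
    PP s (ξ.co g s) = PP t (ξ.co g t) := by
  by_cases h : s = t
  · rw [h]
  · have e1 : ξ.co g s = 0 := Subtype.ext (ht s h)
    have e2 : ξ.co g t = 0 := Subtype.ext (hs t (Ne.symm h))
    rw [e1, e2]; exact PP_zero _ _

/-- the map seen from vertex `g` -/
noncomputable def Jg (g : FG) (ξ : T) : X := PP (Kc_cover g ξ).choose (ξ.co g (Kc_cover g ξ).choose)

lemma Jg_eq {g : FG} {s : Ltr} {ξ : T} (hs : ξ ∈ Kc g s) : Jg g ξ = PP s (ξ.co g s) :=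
  PP_agree (Kc_cover g ξ).choose_spec hs

lemma Jg_continuous (g : FG) : Continuous (Jg g) := by
  refine (locallyFinite_of_finite (Kc g)).continuous ?_ (Kc_closed g) ?_
  · rw [Set.eq_univ_iff_forall]
    intro ξ; rw [Set.mem_iUnion]; exact Kc_cover g ξ
  · intro s
    refine ContinuousOn.congr (f := fun ξ : T => PP s (ξ.co g s)) ?_ (fun ξ hξ => Jg_eq hξ)
    exact ((PP_continuous s).comp (T.co_continuous g s)).continuousOn

lemma Jg_indep {g h : FG} {ξ : T} (hg : ∀ s, ξ.1 g s < 1) (hh : ∀ s, ξ.1 h s < 1) :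
    Jg g ξ = Jg h ξ := by
  by_cases e : g = h
  · rw [e]
  rcases ξ.2.far hh e with ⟨t, ht⟩ | ⟨s, h1, h2, h3⟩
  · have := hg t; linarith
  · have h4 := hg (inv s)
    have k1 : ξ ∈ Kc h s := fun t ht => ξ.2.eq_zero (by linarith) ht
    have k2 : ξ ∈ Kc g (inv s) := fun t ht => ξ.2.eq_zero h3 ht
    rw [Jg_eq k1, Jg_eq k2]
    apply PP_inv
    change ξ.1 h s + ξ.1 g (inv s) = 1
    linarith

noncomputable def JJ (ξ : T) : X := Jg ξ.2.2.2.2.choose ξ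

lemma JJ_eq {g : FG} {ξ : T} (hg : ∀ s, ξ.1 g s < 1) : JJ ξ = Jg g ξ :=
  Jg_indep ξ.2.2.2.2.choose_spec hg

lemma JJ_continuous : Continuous JJ := by
  rw [continuous_iff_continuousAt]
  intro ξ
  obtain ⟨g, hg⟩ := ξ.2.2.2.2
  have hev : JJ =ᶠ[nhds ξ] Jg g := by
    have ho : IsOpen {η : T | ∀ s, η.1 g s < 1} := by
      simp only [Set.ofPred_forall]
      exact isOpen_iInter_of_finite fun s => isOpen_lt (T.continuous_coord g s) continuous_const
    filter_upwards [ho.mem_nhds hg] with η hη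
    exact JJ_eq hη
  exact (Jg_continuous g).continuousAt.congr hev.symm

lemma JJ_smul (γ : FG) (ξ : T) : JJ (γ • ξ) = JJ ξ := by
  obtain ⟨g, hg⟩ := (γ • ξ).2.2.2.2
  rw [JJ_eq hg, JJ_eq (g := g * γ) (ξ := ξ) hg]
  obtain ⟨s, hs⟩ := Kc_cover g (γ • ξ)
  rw [Jg_eq hs, Jg_eq (g := g * γ) (s := s) (ξ := ξ) hs]
  rfl

lemma JJ_edge (a : Ltr) (t : unitInterval) : JJ (edge a t) = PP a t := by
  by_cases ht : (t : ℝ) < 1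
  · have e : ∀ s, (edge a t).1 1 s = if s = a then (t:ℝ) else 0 := by
      intro s
      change edgeFun a t 1 s = _
      unfold edgeFun
      rw [if_neg (not_par_one s)]; simp
    have hg : ∀ s, (edge a t).1 1 s < 1 := by
      intro s; rw [e]; split_ifs <;> linarith
    have hK : edge a t ∈ Kc 1 a := by
      intro s hs; rw [e, if_neg hs]
    rw [JJ_eq hg, Jg_eq hK]
    congr 1
    apply Subtype.ext
    change (edge a t).1 1 a = t
    rw [e, if_pos rfl]
  · have ht1 : t = 1 := Subtype.ext (le_antisymm t.2.2 (not_lt.1 ht))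
    subst ht1
    have e := edge_one_apply a
    have hg : ∀ s, (edge a 1).1 (lt a) s < 1 := by
      intro s; rw [e]; norm_num
    have hK : edge a 1 ∈ Kc (lt a) (inv a) := fun s _ => e s
    rw [JJ_eq hg, Jg_eq hK]
    apply PP_inv
    change ((1 : unitInterval) : ℝ) + (edge a 1).1 (lt a) (inv a) = 1
    rw [e]; simp

/-! ### The map to the graph -/

noncomputable def psiI (x : ℝ) : unitInterval := ⟨psi x, psi_mem x⟩

lemma toGr_continuous : Continuous toGr := toGr_cov.isCoveringMap.continuous

noncomputable def iF (p : PS) : Gr :=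
  if 0 ≤ p.1.2 then toGr (edge (true, true) (psiI p.1.1)) else toGr (edge (false, true) (psiI p.1.1))

lemma edge_lo (a : Ltr) {x : ℝ} (h : x ≤ 1/4) : toGr (edge a (psiI x)) = toGr root := by
  have : psiI x = 0 := Subtype.ext (psi_lo h)
  rw [this, edge_zero]

lemma edge_hi (a : Ltr) {x : ℝ} (h : 3/4 ≤ x) : toGr (edge a (psiI x)) = toGr root := by
  have : psiI x = 1 := Subtype.ext (psi_hi h)
  rw [this, toGr_edge_one]

lemma edge_agree {p : PS} (h : p.1.2 = 0) :
    toGr (edge (true, true) (psiI p.1.1)) = toGr (edge (false, true) (psiI p.1.1)) := by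
  rcases PS_cases p.2 with h' | h' | h' | h'
  · rw [edge_lo _ h', edge_lo _ h']
  · rw [edge_hi _ h', edge_hi _ h']
  · linarith
  · linarith

lemma psiI_continuous : Continuous psiI := Continuous.subtype_mk psi_continuous _

lemma iF_continuous : Continuous iF := by
  have hx : Continuous (fun p : PS => psiI p.1.1) := psiI_continuous.comp (by fun_prop)
  refine Continuous.if_le (toGr_continuous.comp ((edge_continuous _).comp hx))
    (toGr_continuous.comp ((edge_continuous _).comp hx)) continuous_const (by fun_prop) ?_
  intro p h
  exact edge_agree h.symm

lemma iF_neg {p : PS} (h : p.1.2 ≤ 0) : iF p = toGr (edge (false, true) (psiI p.1.1)) := by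
  unfold iF
  split_ifs with h'
  · exact edge_agree (le_antisymm h h')
  · rfl

lemma exists_i : ∃ i : C(X, Gr), ∀ p, i (pr p) = iF p := by
  refine desc0 iF iF_continuous ?_
  intro p q h1 h2 _
  unfold iF
  rw [edge_lo _ (by rw [h1]; norm_num), edge_lo _ (by rw [h1]; norm_num),
    edge_hi _ (by rw [h2]; norm_num), edge_hi _ (by rw [h2]; norm_num), ite_self, ite_self]

theorem spine : ∃ (i : C(X, Gr)) (J : C(T, X)) (D1 D2 : C(unitInterval × X, X)),
    (∀ x, D1 (0, x) = x) ∧ (∀ x, D1 (1, x) = D2 (0, x)) ∧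
    ∀ ξ x, toGr ξ = i x → J ξ = D2 (1, x) := by
  obtain ⟨i, hi⟩ := exists_i
  obtain ⟨D1, h1, h1'⟩ := exists_D1
  obtain ⟨D2, h2, h2'⟩ := exists_D2
  refine ⟨i, ⟨JJ, JJ_continuous⟩, D1, D2, h1, ?_, ?_⟩
  · intro x
    obtain ⟨p, rfl⟩ := pr_surj x
    rw [h1' p ⟨_, psi_mem_PS p.2⟩ rfl, h2 p ⟨_, psi_mem_PS p.2⟩ rfl]
  · intro ξ x h
    obtain ⟨p, rfl⟩ := pr_surj x
    rw [hi] at h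
    change JJ ξ = _
    rcases le_total 0 p.1.2 with hp | hp
    · unfold iF at h
      rw [if_pos hp] at h
      obtain ⟨γ, rfl⟩ := toGr_eq.1 h
      rw [JJ_smul, JJ_edge, h2' p ⟨_, PP_mem (true, true) (psiI p.1.1)⟩ ?_]
      · rfl
      · rw [sg_pos p.2 hp]; rfl
    · rw [iF_neg hp] at h
      obtain ⟨γ, rfl⟩ := toGr_eq.1 h
      rw [JJ_smul, JJ_edge, h2' p ⟨_, PP_mem (false, true) (psiI p.1.1)⟩ ?_]
      · rfl
      · rw [sg_neg p.2 hp]; rfl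

/-! ### Lifting to the tree -/

noncomputable def cl (p : ℝ × ℝ) : ℝ × ℝ := (max 0 (min 1 p.1), max (-1) (min 1 p.2))

lemma cl_continuous : Continuous cl := by unfold cl; fun_prop

lemma cl_mem (p : ℝ × ℝ) : cl p ∈ Sq := 
  ⟨⟨le_max_left _ _, max_le zero_le_one (min_le_left _ _)⟩,
    ⟨le_max_left _ _, max_le (by norm_num) (min_le_left _ _)⟩⟩

lemma cl_eq {p : ℝ × ℝ} (h : p ∈ Sq) : cl p = p := by
  obtain ⟨⟨h1, h2⟩, h3, h4⟩ := h
  unfold cl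
  rw [min_eq_right h2, min_eq_right h4, max_eq_right h1, max_eq_right h3]

lemma isPreconnected_hole : IsPreconnected {p : ℝ × ℝ | nn p ≤ 1/4} := by
  have : {p : ℝ × ℝ | nn p ≤ 1/4} = Icc (1/4) (3/4) ×ˢ Icc (-1/4) (1/4) := by
    ext p
    simp only [nn, Set.mem_ofPred_eq, Set.mem_prod, Set.mem_Icc, max_le_iff, abs_le]
    constructor
    · rintro ⟨⟨h1, h2⟩, h3, h4⟩
      refine ⟨⟨?_, ?_⟩, ?_, ?_⟩ <;> linarith
    · rintro ⟨⟨h1, h2⟩, h3, h4⟩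
      refine ⟨⟨?_, ?_⟩, ?_, ?_⟩ <;> linarith
  rw [this]
  exact isPreconnected_Icc.prod isPreconnected_Icc

open Classical in
theorem lift_exists (F : C(X, Gr)) (a b : Gr) (h1 : ∀ x ∈ C1, F x = a) (h2 : ∀ x ∈ C2, F x = b) :
    ∃ L : C(X, T), (∀ x, toGr (L x) = F x) ∧ (∃ u, ∀ x ∈ C1, L x = u) ∧ ∃ v, ∀ x ∈ C2, L x = v := by
  let E : ℝ × ℝ → Gr := fun p =>
    if h : 1/4 ≤ nn (cl p) then F (pr ⟨cl p, cl_mem p, h⟩) else b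
  have Epos : ∀ p (h : 1/4 ≤ nn (cl p)), E p = F (pr ⟨cl p, cl_mem p, h⟩) := fun p h => dif_pos h
  have Ehole : ∀ p, nn (cl p) ≤ 1/4 → E p = b := by
    intro p hp
    by_cases h : 1/4 ≤ nn (cl p)
    · rw [Epos p h]
      apply h2
      rw [mem_C2, nX_pr]
      exact le_antisymm hp h
    · exact dif_neg h
  have EPS : ∀ p : PS, E p.1 = F (pr p) := by
    rintro ⟨p, hp⟩
    have e := cl_eq hp.1
    rw [Epos p (by rw [e]; exact hp.2)]
    congr 2
    exact Subtype.ext e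
  have hnc : Continuous (fun p => nn (cl p)) := nn_continuous.comp cl_continuous
  have Ec : Continuous E := by
    have k1 : ContinuousOn E {p | 1/4 ≤ nn (cl p)} := by
      rw [continuousOn_iff_continuous_domRestrict]
      have : Continuous (fun p : {p | 1/4 ≤ nn (cl p)} => F (pr ⟨cl p.1, cl_mem p.1, p.2⟩)) :=
        F.continuous.comp (pr_continuous.comp
          (Continuous.subtype_mk (cl_continuous.comp continuous_subtype_val) _))
      refine this.congr ?_
      intro p
      exact (Epos p.1 p.2).symm
    have k2 : ContinuousOn E {p | nn (cl p) ≤ 1/4} :=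
      continuousOn_const.congr (fun p hp => Ehole p hp)
    have := k1.union_of_isClosed k2 (isClosed_le continuous_const hnc) (isClosed_le hnc continuous_const)
    have hu : {p | 1/4 ≤ nn (cl p)} ∪ {p | nn (cl p) ≤ 1/4} = univ := by
      rw [Set.eq_univ_iff_forall]; intro p; exact le_total (1/4) (nn (cl p))
    rw [hu] at this
    exact continuousOn_univ.1 this
  obtain ⟨e0, he0⟩ : ∃ e0, toGr e0 = E (0, 0) := Quotient.exists_rep _
  obtain ⟨L, ⟨-, hL⟩, -⟩ := toGr_cov.isCoveringMap.existsUnique_continuousMap_lifts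
    (⟨E, Ec⟩ : C(ℝ × ℝ, Gr)) (0, 0) e0 he0
  have hL' : ∀ p, toGr (L p) = E p := fun p => congrFun hL p
  have nnbig : ∀ p : ℝ × ℝ, p ∈ Sq → (|p.2| = 1 ∨ p.1 = 0 ∨ p.1 = 1) → p ∈ PS := by
    intro p hp h
    refine ⟨hp, ?_⟩
    rcases h with h | h | h
    · exact le_max_of_le_right (by rw [h]; norm_num)
    · exact le_max_of_le_left (by rw [h]; norm_num [abs_of_pos])
    · exact le_max_of_le_left (by rw [h]; norm_num [abs_of_pos])
  have hE1 : ∀ x ∈ Icc (0:ℝ) 1, ∀ y, |y| = 1 → E (x, y) = a := by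
    intro x hx y hy
    have hm : (x, y) ∈ PS := nnbig _ ⟨hx, abs_le.1 hy.le⟩ (Or.inl hy)
    rw [EPS ⟨_, hm⟩]
    apply h1
    rw [mem_C1, ay_pr]
    exact hy
  have hconst : ∀ y, |y| = 1 → ∀ x ∈ Icc (0:ℝ) 1, L (x, y) = L (0, y) := by
    intro y hy x hx
    have hc : ContinuousOn (fun x : ℝ => L (x, y)) (Icc 0 1) := by
      have : Continuous (fun x : ℝ => L (x, y)) := by fun_prop
      exact this.continuousOn
    refine toGr_cov.isCoveringMap.constOn_of_comp isPreconnected_Icc hc ?_ hx ⟨le_rfl, zero_le_one⟩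
    intro x hx x' hx'
    rw [hL', hL', hE1 x hx y hy, hE1 x' hx' y hy]
  have hE01 : ∀ y ∈ Icc (-1:ℝ) 1, E (1, -y) = E (0, y) := by
    intro y hy
    have hm : ((0:ℝ), y) ∈ PS := nnbig _ ⟨⟨le_rfl, zero_le_one⟩, hy⟩ (by simp)
    have hm' : ((1:ℝ), -y) ∈ PS :=
      nnbig _ ⟨⟨zero_le_one, le_rfl⟩, by simpa using (neg_le_neg hy.2), by simp only; linarith [hy.1]⟩ (by simp)
    rw [EPS ⟨_, hm⟩, EPS ⟨_, hm'⟩]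
    congr 1
    symm
    apply pr_glue <;> simp
  obtain ⟨h, hh⟩ : ∃ h : FG, h • L (0, 0) = L (1, -0) := by
    apply toGr_eq.1
    rw [hL', hL', hE01 0 (by norm_num)]
  have hdeck : ∀ y ∈ Icc (-1:ℝ) 1, L (1, -y) = h • L (0, y) := by
    have hc1 : Continuous (fun y : ℝ => L (1, -y)) := by fun_prop
    have hc2 : Continuous (fun y : ℝ => h • L (0, y)) := by
      have : Continuous (fun y : ℝ => L (0, y)) := by fun_prop
      exact this.const_smul h
    refine toGr_cov.isCoveringMap.eqOn_of_comp_eqOn isPreconnected_Icc hc1.continuousOn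
      hc2.continuousOn ?_ (a := 0) (by norm_num) hh.symm
    intro y hy
    simp only [Function.comp]
    rw [toGr_smul, hL', hL', hE01 y hy]
  have hh1 : h = 1 := by
    have e1 := hdeck 1 (by norm_num)
    have e2 := hdeck (-1) (by norm_num)
    rw [hconst (-1) (by norm_num) 1 (by norm_num)] at e1
    rw [neg_neg, hconst 1 (by norm_num) 1 (by norm_num), e1, smul_smul] at e2
    have := toGr_cov.isCancelSMul
    have e3 : h * h = 1 := by
      refine IsCancelSMul.right_cancel _ _ (L (0, 1)) ?_
      rw [one_smul]; exact e2.symm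
    have := IsMulTorsionFree.pow_left_injective (M := FG) (n := 2) (by norm_num)
    apply this
    simp only [one_pow]
    rw [pow_two]; exact e3
  subst hh1
  obtain ⟨Lb, hLb⟩ := desc0 (fun p : PS => L p.1) (L.continuous.comp continuous_subtype_val) (by
    rintro ⟨⟨x, y⟩, hp⟩ ⟨⟨x', y'⟩, hp'⟩ e1 e2 e3
    simp only at e1 e2 e3
    subst e1 e2 e3
    have := hdeck (-y') hp.1.2
    rw [neg_neg, one_smul] at this
    exact this.symm)
  refine ⟨Lb, ?_, ⟨L (0, 1), ?_⟩, ⟨L (1/2, 0), ?_⟩⟩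
  · intro x
    obtain ⟨p, rfl⟩ := pr_surj x
    rw [hLb, hL', EPS]
  · intro x hx
    obtain ⟨⟨⟨x, y⟩, hp⟩, rfl⟩ := pr_surj x
    rw [mem_C1, ay_pr] at hx
    simp only at hx
    rw [hLb]
    simp only
    rw [hconst y hx x hp.1.1]
    rcases (abs_eq (by norm_num)).1 hx with rfl | rfl
    · rfl
    · have := hdeck (-1) (by norm_num)
      rw [neg_neg, one_smul, hconst 1 (by norm_num) 1 (by norm_num)] at this
      exact this.symm
  · intro x hx
    obtain ⟨p, rfl⟩ := pr_surj x
    rw [mem_C2, nX_pr] at hx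
    rw [hLb]
    refine toGr_cov.isCoveringMap.constOn_of_comp isPreconnected_hole L.continuous.continuousOn ?_ hx.le
      (by simp [nn])
    have key : ∀ q : ℝ × ℝ, nn q ≤ 1/4 → E q = b := by
      intro q hq
      apply Ehole
      rw [cl_eq]
      · exact hq
      · have h1 := abs_le.1 ((le_max_left _ _ : |q.1 - 1/2| ≤ nn q).trans hq)
        have h2 := abs_le.1 ((le_max_right _ _ : |q.2| ≤ nn q).trans hq)
        exact ⟨⟨by linarith, by linarith⟩, by linarith, by linarith⟩
    intro q hq q' hq'
    rw [hL', hL', key q hq, key q' hq']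

/-! ### Assembly -/

/-- A homotopy given by a function, satisfying a property at all times. -/
lemma mk_hw (P : C(X, X) → Prop) (f g : C(X, X)) (H : unitInterval × X → X) (hc : Continuous H)
    (h0 : ∀ x, H (0, x) = f x) (h1 : ∀ x, H (1, x) = g x)
    (hP : ∀ (s : unitInterval) (k : C(X, X)), (∀ x, k x = H (s, x)) → P k) :
    ContinuousMap.HomotopicWith f g P :=
  ⟨{ toFun := H
     continuous_toFun := hc
     map_zero_left := h0
     map_one_left := h1
     prop' := fun t => hP t _ (fun _ => rfl) }⟩

def PB (k : C(X, X)) : Prop := ∀ x ∈ Bd, k x ∈ Bd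

lemma bh_of_hw {f g : C(X, X)} (h : ContinuousMap.HomotopicWith f g PB) : BoundaryHomotopic f g := by
  obtain ⟨H⟩ := h
  exact ⟨H.toHomotopy, fun x hx t => H.prop' t x hx⟩

def PC (k : C(X, X)) : Prop :=
  (∀ x ∈ C1, ∀ x' ∈ C1, k x = k x') ∧ (∀ x ∈ C2, ∀ x' ∈ C2, k x = k x')

/-- A map constant on each boundary circle contracts through such maps. -/
theorem contract (f : C(X, X)) (hf : PC f) (hn1 : C1.Nonempty) (hn2 : C2.Nonempty) :
    ∃ (K : C(unitInterval × X, X)) (m : X), (∀ x, K (0, x) = f x) ∧ (∀ x, K (1, x) = m) ∧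
      (∀ s, ∀ x ∈ C1, ∀ x' ∈ C1, K (s, x) = K (s, x')) ∧
      (∀ s, ∀ x ∈ C2, ∀ x' ∈ C2, K (s, x) = K (s, x')) := by
  obtain ⟨i, J, D1, D2, hD1, hD12, hJ⟩ := spine
  obtain ⟨x1, hx1⟩ := hn1
  obtain ⟨x2, hx2⟩ := hn2
  obtain ⟨L, hL, ⟨u, hu⟩, ⟨v, hv⟩⟩ := lift_exists (i.comp f) (i (f x1)) (i (f x2))
    (fun x hx => congrArg i (hf.1 x hx x1 hx1)) (fun x hx => congrArg i (hf.2 x hx x2 hx2))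
  have hJL : ∀ x, J (L x) = D2 (1, f x) := fun x => hJ _ _ (hL x)
  have e1 : ContinuousMap.HomotopicWith f ⟨fun x => D1 (1, f x), by fun_prop⟩ PC := by
    refine mk_hw PC _ _ (fun u => D1 (u.1, f u.2)) (by fun_prop) (fun x => hD1 _) (fun x => rfl) ?_
    intro s k hk
    refine ⟨fun x hx x' hx' => ?_, fun x hx x' hx' => ?_⟩
    · rw [hk, hk]; simp only; rw [hf.1 x hx x' hx']
    · rw [hk, hk]; simp only; rw [hf.2 x hx x' hx']
  have e2 : ContinuousMap.HomotopicWith (⟨fun x => D1 (1, f x), by fun_prop⟩ : C(X, X))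
      (J.comp L) PC := by
    refine mk_hw PC _ _ (fun u => D2 (u.1, f u.2)) (by fun_prop) (fun x => (hD12 _).symm)
      (fun x => (hJL x).symm) ?_
    intro s k hk
    refine ⟨fun x hx x' hx' => ?_, fun x hx x' hx' => ?_⟩
    · rw [hk, hk]; simp only; rw [hf.1 x hx x' hx']
    · rw [hk, hk]; simp only; rw [hf.2 x hx x' hx']
  have e3 : ContinuousMap.HomotopicWith (J.comp L) (ContinuousMap.const X (J root)) PC := by
    refine mk_hw PC _ _ (fun u => J (contr (u.1, L u.2))) ?_ ?_ ?_ ?_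
    · exact J.continuous.comp (contr_continuous.comp (by fun_prop))
    · intro x; simp only; rw [contr_zero]; rfl
    · intro x; simp only; rw [contr_one]; rfl
    · intro s k hk
      refine ⟨fun x hx x' hx' => ?_, fun x hx x' hx' => ?_⟩
      · rw [hk, hk]; simp only; rw [hu x hx, hu x' hx']
      · rw [hk, hk]; simp only; rw [hv x hx, hv x' hx']
  obtain ⟨K⟩ := (e1.trans e2).trans e3
  refine ⟨K.toHomotopy.toContinuousMap, J root, fun x => K.toHomotopy.map_zero_left x,
    fun x => K.toHomotopy.map_one_left x, ?_, ?_⟩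
  · intro s x hx x' hx'
    exact (K.prop' s).1 x hx x' hx'
  · intro s x hx x' hx'
    exact (K.prop' s).2 x hx x' hx'

lemma C1_nonempty : C1.Nonempty := by
  have hm : ((0:ℝ), (1:ℝ)) ∈ PS := by
    rw [mem_PS]; norm_num [nn]
  refine ⟨pr ⟨_, hm⟩, ?_⟩
  rw [mem_C1, ay_pr]; norm_num

lemma C2_nonempty : C2.Nonempty := by
  have h : nn ((1/4:ℝ), (0:ℝ)) = 1/4 := by norm_num [nn, abs_of_pos]
  have hm : ((1/4:ℝ), (0:ℝ)) ∈ PS := by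
    rw [mem_PS, h]; norm_num
  refine ⟨pr ⟨_, hm⟩, ?_⟩
  rw [mem_C2, nX_pr]; exact h

/-- Paths in the boundary stay in their circle. -/
lemma path_bd (γ : unitInterval → Bd) (hγ : Continuous γ) :
    (((γ 0 : X) ∈ C1 → (γ 1 : X) ∈ C1) ∧ ((γ 0 : X) ∈ C2 → (γ 1 : X) ∈ C2)) := by
  have hc : Continuous (fun t => nX (γ t : X)) := by fun_prop
  have hC1 : ∀ x ∈ C1, 1 ≤ nX x := by
    intro x hx; rw [mem_C1] at hx; rw [← hx]; exact ay_le_nX x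
  have hC2 : ∀ x ∈ C2, nX x = 1/4 := fun x hx => (mem_C2 x).1 hx
  have no : ∀ t, nX (γ t : X) ≠ 1/2 := by
    intro t h
    rcases (γ t).2 with h' | h'
    · have := hC1 _ h'; linarith
    · have := hC2 _ h'; linarith
  constructor
  · intro h0
    rcases (γ 1).2 with h' | h'
    · exact h'
    · exfalso
      obtain ⟨t, ht⟩ := mem_range_of_exists_le_of_exists_ge hc (c := 1/2)
        ⟨1, by rw [hC2 _ h']; norm_num⟩ ⟨0, by linarith [hC1 _ h0]⟩
      exact no t ht
  · intro h0
    rcases (γ 1).2 with h' | h'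
    · exfalso
      obtain ⟨t, ht⟩ := mem_range_of_exists_le_of_exists_ge hc (c := 1/2)
        ⟨0, by rw [hC2 _ h0]; norm_num⟩ ⟨1, by linarith [hC1 _ h']⟩
      exact no t ht
    · exact h'

noncomputable def pI (t : ℝ) : unitInterval := projIcc 0 1 zero_le_one t
lemma pI_continuous : Continuous pI := continuous_projIcc (h := zero_le_one)
lemma pI_coe {t : ℝ} (h0 : 0 ≤ t) (h1 : t ≤ 1) : (pI t : ℝ) = t := by
  unfold pI; rw [projIcc_of_mem zero_le_one ⟨h0, h1⟩]
lemma pI_zero : pI 0 = 0 := projIcc_left zero_le_one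
lemma pI_one : pI 1 = 1 := projIcc_right zero_le_one

noncomputable def d1 (x : X) : ℝ := min 1 (4 * (1 - ay x))
noncomputable def d2 (x : X) : ℝ := min 1 (8 * (nX x - 1/4))
lemma d1_continuous : Continuous d1 := by unfold d1; fun_prop
lemma d2_continuous : Continuous d2 := by unfold d2; fun_prop
lemma d1_le (x) : d1 x ≤ 1 := min_le_left _ _
lemma d2_le (x) : d2 x ≤ 1 := min_le_left _ _
lemma d1_ge (x) : 0 ≤ d1 x := le_min zero_le_one (by linarith [ay_le x])
lemma d2_ge (x) : 0 ≤ d2 x := le_min zero_le_one (by linarith [nX_ge x])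
lemma d1_C1 {x} (h : x ∈ C1) : d1 x = 0 := by
  rw [mem_C1] at h; unfold d1; rw [h]; norm_num
lemma d2_C2 {x} (h : x ∈ C2) : d2 x = 0 := by
  rw [mem_C2] at h; unfold d2; rw [h]; norm_num
lemma d1_far {x} (h : ay x ≤ 3/4) : d1 x = 1 := min_eq_left (by linarith)
lemma d2_far {x} (h : 3/8 ≤ nX x) : d2 x = 1 := min_eq_left (by linarith)

open Classical in
/-- First step: make the map constant on each boundary circle. -/
theorem step1 (f : C(X, X)) (h12 : MapsTo f C1 C2) (h21 : MapsTo f C2 C1)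
    (h1 : Inessential (restrictMap f (h12.mono_right Set.subset_union_right : MapsTo f C1 Bd)))
    (h2 : Inessential (restrictMap f (h21.mono_right Set.subset_union_left : MapsTo f C2 Bd))) :
    ∃ f1 : C(X, X), ContinuousMap.HomotopicWith f f1 PB ∧
      ∃ a ∈ C2, ∃ b ∈ C1, (∀ x ∈ C1, f1 x = a) ∧ (∀ x ∈ C2, f1 x = b) := by
  obtain ⟨a, ⟨B1⟩⟩ := h1
  obtain ⟨b, ⟨B2⟩⟩ := h2
  obtain ⟨ρ, r0, rB, r1, r2⟩ := exists_rho
  have B10 : ∀ x : C1, (B1 (0, x) : X) = f x := fun x => congrArg Subtype.val (B1.map_zero_left x)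
  have B11 : ∀ x : C1, B1 (1, x) = a := fun x => B1.map_one_left x
  have B20 : ∀ x : C2, (B2 (0, x) : X) = f x := fun x => congrArg Subtype.val (B2.map_zero_left x)
  have B21 : ∀ x : C2, B2 (1, x) = b := fun x => B2.map_one_left x
  have ha : (a : X) ∈ C2 := by
    obtain ⟨x, hx⟩ := C1_nonempty
    have := (path_bd (fun t => B1 (t, ⟨x, hx⟩)) (by fun_prop)).2
    rw [← B11 ⟨x, hx⟩]
    apply this
    rw [B10]; exact h12 hx
  have hb : (b : X) ∈ C1 := by
    obtain ⟨x, hx⟩ := C2_nonempty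
    have := (path_bd (fun t => B2 (t, ⟨x, hx⟩)) (by fun_prop)).1
    rw [← B21 ⟨x, hx⟩]
    apply this
    rw [B20]; exact h21 hx
  let H : unitInterval × X → X := fun u =>
    if h : 3/4 ≤ ay u.2 then B1 (pI (u.1 * (1 - d1 u.2)), ⟨ρ (1, u.2), r1 _ h⟩)
    else if h : nX u.2 ≤ 3/8 then B2 (pI (u.1 * (1 - d2 u.2)), ⟨ρ (1, u.2), r2 _ h⟩)
    else f (ρ (1, u.2))
  have H1 : ∀ u (h : 3/4 ≤ ay u.2), 
      H u = B1 (pI (u.1 * (1 - d1 u.2)), ⟨ρ (1, u.2), r1 _ h⟩) := fun u h => dif_pos h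
  have H2 : ∀ u (h : nX u.2 ≤ 3/8), 
      H u = B2 (pI (u.1 * (1 - d2 u.2)), ⟨ρ (1, u.2), r2 _ h⟩) := by
    intro u h
    have h' : ¬ 3/4 ≤ ay u.2 := by
      intro h'; have := ay_le_nX u.2; linarith
    simp only [H]
    rw [dif_neg h', dif_pos h]
  have H3 : ∀ u, ay u.2 ≤ 3/4 → 3/8 ≤ nX u.2 → H u = f (ρ (1, u.2)) := by
    intro u hu hu'
    by_cases k1 : 3/4 ≤ ay u.2
    · rw [H1 u k1, d1_far hu, sub_self, mul_zero, pI_zero, B10]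
    by_cases k2 : nX u.2 ≤ 3/8
    · rw [H2 u k2, d2_far hu', sub_self, mul_zero, pI_zero, B20]
    · simp only [H]
      rw [dif_neg k1, dif_neg k2]
  have hay : Continuous (fun u : unitInterval × X => ay u.2) := by fun_prop
  have hnX : Continuous (fun u : unitInterval × X => nX u.2) := by fun_prop
  have hd1 := d1_continuous
  have hd2 := d2_continuous
  have hp := pI_continuous
  have Hc : Continuous H := by
    have k1 : ContinuousOn H {u | 3/4 ≤ ay u.2} := by
      rw [continuousOn_iff_continuous_domRestrict]
      have : Continuous (fun u : {u : unitInterval × X | 3/4 ≤ ay u.2} =>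
          (B1 (pI (u.1.1 * (1 - d1 u.1.2)), ⟨ρ (1, u.1.2), r1 _ u.2⟩) : X)) := by
        refine continuous_subtype_val.comp (B1.continuous.comp (Continuous.prodMk ?_ ?_))
        · fun_prop
        · exact Continuous.subtype_mk (by fun_prop) _
      exact this.congr (fun u => (H1 u.1 u.2).symm)
    have k2 : ContinuousOn H {u | nX u.2 ≤ 3/8} := by
      rw [continuousOn_iff_continuous_domRestrict]
      have : Continuous (fun u : {u : unitInterval × X | nX u.2 ≤ 3/8} =>
          (B2 (pI (u.1.1 * (1 - d2 u.1.2)), ⟨ρ (1, u.1.2), r2 _ u.2⟩) : X)) := by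
        refine continuous_subtype_val.comp (B2.continuous.comp (Continuous.prodMk ?_ ?_))
        · fun_prop
        · exact Continuous.subtype_mk (by fun_prop) _
      exact this.congr (fun u => (H2 u.1 u.2).symm)
    have k3 : ContinuousOn H ({u | ay u.2 ≤ 3/4} ∩ {u | 3/8 ≤ nX u.2}) := by
      refine ContinuousOn.congr (f := fun u => f (ρ (1, u.2))) ?_ (fun u hu => H3 u hu.1 hu.2)
      have : Continuous (fun u : unitInterval × X => f (ρ (1, u.2))) := by fun_prop
      exact this.continuousOn
    have c1 : IsClosed {u : unitInterval × X | 3/4 ≤ ay u.2} := isClosed_le continuous_const hay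
    have c2 : IsClosed {u : unitInterval × X | nX u.2 ≤ 3/8} := isClosed_le hnX continuous_const
    have c3 : IsClosed ({u : unitInterval × X | ay u.2 ≤ 3/4} ∩ {u | 3/8 ≤ nX u.2}) :=
      (isClosed_le hay continuous_const).inter (isClosed_le continuous_const hnX)
    have := (k1.union_of_isClosed k2 c1 c2).union_of_isClosed k3 (c1.union c2) c3
    rw [← continuousOn_univ]
    refine this.mono ?_
    intro u _
    rcases le_total (3/4) (ay u.2) with h | h
    · exact Or.inl (Or.inl h)
    rcases le_total (nX u.2) (3/8) with h' | h'
    · exact Or.inl (Or.inr h')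
    · exact Or.inr ⟨h, h'⟩
  have big1 : ∀ x ∈ C1, 3/4 ≤ ay x := fun x hx => by rw [(mem_C1 x).1 hx]; norm_num
  have small2 : ∀ x ∈ C2, nX x ≤ 3/8 := fun x hx => by rw [(mem_C2 x).1 hx]; norm_num
  refine ⟨⟨fun x => H (1, x), by fun_prop⟩, ?_, a, ha, b, hb, ?_, ?_⟩
  · have e1 : ContinuousMap.HomotopicWith f ⟨fun x => f (ρ (1, x)), by fun_prop⟩ PB := by
      refine mk_hw PB _ _ (fun u => f (ρ u)) (by fun_prop) (fun x => ?_) (fun x => rfl) ?_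
      · rw [r0]
      · intro s k hk x hx
        rw [hk, rB s x hx]
        rcases hx with hx | hx
        · exact Or.inr (h12 hx)
        · exact Or.inl (h21 hx)
    refine e1.trans (mk_hw PB _ _ H Hc ?_ (fun x => rfl) ?_)
    · intro x
      change H (0, x) = f (ρ (1, x))
      rcases le_total (3/4) (ay x) with h | h
      · rw [H1 (0, x) h]
        have : ((0 : unitInterval) : ℝ) = 0 := rfl
        simp only [this, zero_mul, pI_zero]
        rw [B10]
      rcases le_total (nX x) (3/8) with h' | h'
      · rw [H2 (0, x) h']
        have : ((0 : unitInterval) : ℝ) = 0 := rfl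
        simp only [this, zero_mul, pI_zero]
        rw [B20]
      · exact H3 (0, x) h h'
    · intro s k hk x hx
      rw [hk]
      rcases hx with hx | hx
      · rw [H1 (s, x) (big1 x hx)]; exact Subtype.coe_prop _
      · rw [H2 (s, x) (small2 x hx)]; exact Subtype.coe_prop _
  · intro x hx
    change H (1, x) = a
    rw [H1 (1, x) (big1 x hx)]
    have : ((1 : unitInterval) : ℝ) = 1 := rfl
    simp only [this, d1_C1 hx, sub_zero, mul_one, pI_one]
    rw [B11]
  · intro x hx
    change H (1, x) = b
    rw [H2 (1, x) (small2 x hx)]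
    have : ((1 : unitInterval) : ℝ) = 1 := rfl
    simp only [this, d2_C2 hx, sub_zero, mul_one, pI_one]
    rw [B21]

/-- Second step: factor the map through an interval. -/
theorem step2 (f : C(X, X)) {a b : X} (ha : a ∈ C2) (hb : b ∈ C1)
    (hfa : ∀ x ∈ C1, f x = a) (hfb : ∀ x ∈ C2, f x = b) :
    ∃ φ : C(ℝ, X), φ (-1) = a ∧ φ 1 = b ∧ 
      ContinuousMap.HomotopicWith f
        ⟨fun x => φ (d1 x - d2 x), φ.continuous.comp (d1_continuous.sub d2_continuous)⟩ PB := by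
  obtain ⟨K, m, K0, K1, KC1, KC2⟩ := contract f
    ⟨fun x hx x' hx' => by rw [hfa x hx, hfa x' hx'], fun x hx x' hx' => by rw [hfb x hx, hfb x' hx']⟩
    C1_nonempty C2_nonempty
  obtain ⟨x1, hx1⟩ := C1_nonempty
  obtain ⟨x2, hx2⟩ := C2_nonempty
  obtain ⟨ρ, r0, rB, r1, r2⟩ := exists_rho
  have hp := pI_continuous
  have hd1 := d1_continuous
  have hd2 := d2_continuous
  have hφ : Continuous (fun t : ℝ => if t ≤ 0 then K (pI (1 + t), x1) else K (pI (1 - t), x2)) := by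
    refine Continuous.if_le (by fun_prop) (by fun_prop) continuous_id continuous_const ?_
    rintro t rfl
    rw [add_zero, sub_zero, pI_one, K1, K1]
  let φ : C(ℝ, X) := ⟨_, hφ⟩
  have φneg : ∀ t ≤ 0, φ t = K (pI (1 + t), x1) := fun t ht => if_pos ht
  have φpos : ∀ t, 0 ≤ t → φ t = K (pI (1 - t), x2) := by
    intro t ht
    rcases ht.lt_or_eq with h | h
    · exact if_neg (not_le.2 h)
    · rw [φneg t h.symm.le, ← h, add_zero, sub_zero, pI_one, K1, K1]
  have key : ∀ x, K (pI (min (d1 x) (d2 x)), ρ (1, x)) = φ (d1 x - d2 x) := by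
    intro x
    rcases le_total (3/4) (ay x) with h | h
    · have e2 : d2 x = 1 := d2_far (by linarith [ay_le_nX x])
      rw [e2, min_eq_left (d1_le x), φneg _ (by linarith [d1_le x])]
      rw [KC1 _ _ (r1 x h) _ hx1]
      congr 3
      ring
    have e1 : d1 x = 1 := d1_far h
    rcases le_total (nX x) (3/8) with h' | h'
    · rw [e1, min_eq_right (d2_le x), φpos _ (by linarith [d2_le x])]
      rw [KC2 _ _ (r2 x h') _ hx2]
      congr 3
      ring
    · rw [e1, d2_far h', min_self, pI_one, sub_self, φneg _ le_rfl, add_zero, pI_one, K1, K1]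
  refine ⟨φ, ?_, ?_, ?_⟩
  · rw [φneg _ (by norm_num)]
    norm_num
    rw [pI_zero, K0, hfa x1 hx1]
  · rw [φpos _ (by norm_num), sub_self, pI_zero, K0, hfb x2 hx2]
  · have hPf : ∀ x ∈ Bd, f x ∈ Bd := by
      rintro x (hx | hx)
      · rw [hfa x hx]; exact Or.inr ha
      · rw [hfb x hx]; exact Or.inl hb
    have e1 : ContinuousMap.HomotopicWith f ⟨fun x => f (ρ (1, x)), by fun_prop⟩ PB := by
      refine mk_hw PB _ _ (fun u => f (ρ u)) (by fun_prop) (fun x => ?_) (fun x => rfl) ?_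
      · rw [r0]
      · intro s k hk x hx
        rw [hk, rB s x hx]
        exact hPf x hx
    refine e1.trans (mk_hw PB _ _ (fun u => K (pI (u.1 * min (d1 u.2) (d2 u.2)), ρ (1, u.2)))
      (by fun_prop) ?_ ?_ ?_)
    · intro x
      have : ((0 : unitInterval) : ℝ) = 0 := rfl
      simp only [this, zero_mul, pI_zero, K0]; rfl
    · intro x
      have : ((1 : unitInterval) : ℝ) = 1 := rfl
      simp only [this, one_mul]
      exact key x
    · intro s k hk x hx
      have h0 : min (d1 x) (d2 x) = 0 := by
        rcases hx with hx | hx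
        · rw [d1_C1 hx]; exact min_eq_left (d2_ge x)
        · rw [d2_C2 hx]; exact min_eq_right (d1_ge x)
      rw [hk]
      simp only [h0, mul_zero, pI_zero, K0]
      rw [rB 1 x hx]
      exact hPf x hx

/-- The function through which the final map factors. -/
noncomputable def rr (x : X) : ℝ := min 1 (7 - 8 * ay x)
lemma rr_continuous : Continuous rr := by unfold rr; fun_prop
lemma rr_le (x) : rr x ≤ 1 := min_le_left _ _
lemma rr_C1 {x} (h : x ∈ C1) : rr x = -1 := by
  rw [mem_C1] at h; unfold rr; rw [h]; norm_num
lemma rr_C2 {x} (h : x ∈ C2) : rr x = 1 := by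
  rw [mem_C2] at h; unfold rr
  have := ay_le_nX x
  exact min_eq_left (by linarith)

/-- Third step: the map factoring through an interval is deformed to one with one fixed point. -/
theorem step3 (φ : C(ℝ, X)) {a b : X} (ha : a ∈ C2) (hb : b ∈ C1) (hφa : φ (-1) = a) (hφb : φ 1 = b) :
    ∃ g : C(X, X), ContinuousMap.HomotopicWith
        ⟨fun x => φ (d1 x - d2 x), φ.continuous.comp (d1_continuous.sub d2_continuous)⟩ g PB ∧
      ∃ x₀ : X, {x : X | g x = x} = {x₀} ∧ x₀ ∉ Bd := by
  obtain ⟨σ, s0, s1, s2⟩ := exists_sig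
  have hp := pI_continuous
  have hd1 := d1_continuous
  have hd2 := d2_continuous
  have hr := rr_continuous
  have c0 : ((0 : unitInterval) : ℝ) = 0 := rfl
  have c1 : ((1 : unitInterval) : ℝ) = 1 := rfl
  let φ' : ℝ → X := fun t => σ (pI (min 1 (1 - t)), φ (min 1 (2 * t + 1)))
  have hφ' : Continuous φ' := by fun_prop
  refine ⟨⟨fun x => φ' (rr x), hφ'.comp hr⟩, ?_, φ' (1/3), ?_, ?_⟩
  · have e1 : ContinuousMap.HomotopicWith
        ⟨fun x => φ (d1 x - d2 x), φ.continuous.comp (d1_continuous.sub d2_continuous)⟩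
        ⟨fun x => φ (rr x), φ.continuous.comp hr⟩ PB := by
      refine mk_hw PB _ _ (fun u => φ ((1 - (u.1:ℝ)) * (d1 u.2 - d2 u.2) + u.1 * rr u.2))
        (by fun_prop) (fun x => ?_) (fun x => ?_) ?_
      · simp
      · simp
      · intro s k hk x hx
        rw [hk]
        rcases hx with hx | hx
        · have e : d2 x = 1 := by
            apply d2_far
            have := ay_le_nX x
            rw [(mem_C1 x).1 hx] at this
            linarith
          simp only [d1_C1 hx, e, rr_C1 hx]
          have : (1 - (s:ℝ)) * (0 - 1) + s * -1 = -1 := by ring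
          rw [this, hφa]; exact Or.inr ha
        · have e : d1 x = 1 := by
            apply d1_far
            have := ay_le_nX x
            rw [(mem_C2 x).1 hx] at this
            linarith
          simp only [d2_C2 hx, e, rr_C2 hx]
          have : (1 - (s:ℝ)) * (1 - 0) + s * 1 = 1 := by ring
          rw [this, hφb]; exact Or.inl hb
    refine e1.trans (mk_hw PB _ _ (fun u => σ (pI (u.1 * min 1 (1 - rr u.2)),
      φ (min 1 ((1 + (u.1:ℝ)) * rr u.2 + u.1)))) (by fun_prop) ?_ ?_ ?_)
    · intro x
      simp only [c0, zero_mul, pI_zero, s0, add_zero, one_mul, min_eq_right (rr_le x)]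
      rfl
    · intro x
      simp only [c1, one_mul]
      have : (1 + 1) * rr x + 1 = 2 * rr x + 1 := by ring
      rw [this]
      rfl
    · intro s k hk x hx
      rw [hk]
      rcases hx with hx | hx
      · have e : min 1 ((1 + (s:ℝ)) * -1 + s) = -1 := by
          have : (1 + (s:ℝ)) * -1 + s = -1 := by ring
          rw [this]; norm_num
        simp only [rr_C1 hx]
        rw [e, hφa, s2 _ a ha]
        exact Or.inr ha
      · have e : min 1 ((1 + (s:ℝ)) * 1 + s) = 1 := min_eq_left (by linarith [s.2.1])
        simp only [rr_C2 hx]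
        rw [e, hφb, sub_self, min_eq_right zero_le_one, mul_zero, pI_zero, s0]
        exact Or.inl hb
  · have hpos : ∀ t, 0 ≤ t → t ≤ 1 → ay (φ' t) = 3/4 + t/4 := by
      intro t h0 h1
      simp only [φ']
      rw [s1, min_eq_left (by linarith : (1:ℝ) ≤ 2 * t + 1), hφb, (mem_C1 b).1 hb,
        min_eq_right (by linarith : 1 - t ≤ 1), pI_coe (by linarith) (by linarith)]
      rw [min_eq_right (by linarith)]
      ring
    have hneg : ∀ t ≤ 0, ay (φ' t) ≤ 3/4 := by
      intro t h0
      simp only [φ']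
      rw [s1, min_eq_left (by linarith : (1:ℝ) ≤ 1 - t), pI_one, c1]
      exact (min_le_right _ _).trans (by norm_num)
    ext x
    simp only [Set.mem_ofPred_eq, Set.mem_singleton_iff]
    change φ' (rr x) = x ↔ _
    constructor
    · intro hx
      have hle := rr_le x
      rcases le_total (rr x) 0 with h | h
      · exfalso
        have h2 := hneg _ h
        rw [hx] at h2
        have : rr x = 1 := min_eq_left (by linarith)
        linarith
      · have h2 := hpos _ h hle
        rw [hx] at h2
        have h3 : rr x = 7 - 8 * ay x := by
          have : rr x = min 1 (7 - 8 * ay x) := rfl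
          rw [this]
          exact min_eq_right (by linarith)
        have h4 : rr x = 1/3 := by linarith
        rw [← h4, hx]
    · rintro rfl
      have h2 := hpos (1/3) (by norm_num) (by norm_num)
      have : rr (φ' (1/3)) = 1/3 := by
        unfold rr; rw [h2]; norm_num
      rw [this]
  · have h2 : ay (φ' (1/3)) = 5/6 := by
      simp only [φ']
      rw [s1, min_eq_left (by norm_num : (1:ℝ) ≤ 2 * (1/3) + 1), hφb, (mem_C1 b).1 hb,
        min_eq_right (by norm_num : 1 - (1/3:ℝ) ≤ 1), pI_coe (by norm_num) (by norm_num)]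
      norm_num
    rintro (h | h)
    · rw [mem_C1, h2] at h; norm_num at h
    · rw [mem_C2] at h
      have := ay_le_nX (φ' (1/3))
      rw [h2, h] at this
      norm_num at this

/-- A boundary-inessential boundary-preserving map of the punctured Möbius band that
interchanges the two boundary circles is boundary-homotopic to a map with exactly one
fixed point, lying in the interior. -/
theorem stmt_4 (f : C(X, X)) (hf : BoundaryPreserving f)
    (h12 : MapsTo f C1 C2) (h21 : MapsTo f C2 C1)
    (h1 : Inessential (restrictMap f (h12.mono_right Set.subset_union_right : MapsTo f C1 Bd)))
    (h2 : Inessential (restrictMap f (h21.mono_right Set.subset_union_left : MapsTo f C2 Bd))) :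
    ∃ g : C(X, X), BoundaryHomotopic f g ∧
      ∃ x₀ : X, {x : X | g x = x} = {x₀} ∧ x₀ ∉ Bd := by
  obtain ⟨f1, H1, a, ha, b, hb, hfa, hfb⟩ := step1 f h12 h21 h1 h2
  obtain ⟨φ, hφa, hφb, H2⟩ := step2 f1 ha hb hfa hfb
  obtain ⟨g, H3, hg⟩ := step3 φ ha hb hφa hφb
  exact ⟨g, bh_of_hw ((H1.trans H2).trans H3), hg⟩

end PMB
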